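/- arXiv:1312.3889 — 9 statements merged into one kernel-verified Lean document; each statement's English description precedes it below -/
import Mathlib

section
/- Let K be a finite field of characteristic p with [K : F_p] even, so |K| = q^2 for the order q of the subfield of index 2, and let d be an integer with gcd(d, |K| − 1) = 1. If d ≡ p^j (mod q − 1) for some nonnegative integer j (i.e., d is a Niho exponent, a power of p modulo sqrt(|K|) − 1), then the set {W_{K,d}(a) : a ∈ K^×} does not have exactly 3 elements. -/
open scoped BigOperators Classical

/-- The canonical additive character of a finite field `K` of characteristic `p`:
`ψ_K(x) = exp(2πi · Tr_{K/F_p}(x) / p)`, where `Tr_{K/F_p}` is the absolute trace. -/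
noncomputable def canonicalAddChar (p : ℕ) [Fact p.Prime] (K : Type) [Field K] [Fintype K]
    [Algebra (ZMod p) K] (x : K) : ℂ :=
  Complex.exp (2 * Real.pi * Complex.I * ((Algebra.trace (ZMod p) K x).val : ℂ) / (p : ℂ))

/-- The Weil sum `W_{K,d}(a) = ∑_{x ∈ K} ψ_K(x^d + a·x)`. -/
noncomputable def weilSum (p : ℕ) [Fact p.Prime] (K : Type) [Field K] [Fintype K]
    [Algebra (ZMod p) K] (d : ℤ) (a : K) : ℂ :=
  ∑ x : K, canonicalAddChar p K (x ^ d + a * x)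

/-- The value set `{W_{K,d}(a) : a ∈ K^×}` of the Weil sum. -/
noncomputable def weilValues (p : ℕ) [Fact p.Prime] (K : Type) [Field K] [Fintype K]
    [Algebra (ZMod p) K] (d : ℤ) : Set ℂ :=
  {w : ℂ | ∃ a : K, a ≠ 0 ∧ weilSum p K d a = w}

/-- `d` is degenerate over a finite field of order `q` and characteristic `p` if
`d ≡ p^j (mod q − 1)` for some nonnegative integer `j`. -/
def IsDegenerate (p : ℕ) (q : ℕ) (d : ℤ) : Prop :=
  ∃ j : ℕ, d ≡ (p : ℤ) ^ j [ZMOD (q : ℤ) - 1]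


theorem nh_end {K : Type} [Fintype K] [Zero K] (n : K → ℤ) (q : ℕ) (hq2 : 2 ≤ q)
    (hK : Fintype.card K = q ^ 2)
    (h1 : ∑ a, n a = q) (h2 : ∑ a, (n a)^2 = (q:ℤ)^2) (h0 : n 0 = 0)
    (F : Finset K) (hF : F.card = q) (hF0 : (0:K) ∈ F) (hFn : ∀ a ∈ F, 0 ≤ n a)
    (hFs : ∑ a ∈ F, n a = q) (hm : ∀ a, -1 ≤ n a)
    (h3 : (n '' {a | a ≠ 0}).ncard = 3) :
    (∀ a, n a ≠ q) ∧ ∃ m : ℤ, 2 ≤ m ∧ m ∣ q ∧ ∀ a, n a = -1 ∨ n a = 0 ∨ n a = m := by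
  have hno : ∀ a, n a = q → ∀ b, b ≠ a → n b = 0 := by
    intro a ha b hb
    have hs := Finset.sum_le_sum_of_subset_of_nonneg (f := fun x => (n x)^2)
      (Finset.subset_univ {b, a}) (fun i _ _ => sq_nonneg _)
    rw [Finset.sum_pair hb, h2, ha] at hs
    have : (n b)^2 = 0 := le_antisymm (by linarith) (sq_nonneg _)
    exact pow_eq_zero_iff (two_ne_zero) |>.1 this
  have hnq : ∀ a, n a ≠ q := by
    intro a ha
    have hsub : n '' {a | a ≠ 0} ⊆ ({0, (q:ℤ)} : Set ℤ) := by
      rintro _ ⟨b, _, rfl⟩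
      by_cases hb : b = a
      · right; rw [hb, ha]; rfl
      · left; exact hno a ha b hb
    have := Set.ncard_le_ncard hsub (by simp)
    have h' := Set.ncard_insert_le (0:ℤ) {(q:ℤ)}
    rw [Set.ncard_singleton] at h'
    omega
  -- -1 is a value
  have hneg : ∃ a, a ≠ 0 ∧ n a = -1 := by
    by_contra hcon
    push Not at hcon
    have hnn : ∀ a, 0 ≤ n a := by
      intro a
      by_cases ha : a = 0
      · rw [ha, h0]
      · have := hcon a ha; have := hm a; omega
    -- some b with n b > 0
    have hle : ∀ a, n a ≤ q := by
      intro a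
      rw [← h1]
      exact Finset.single_le_sum (f := n) (fun i _ => hnn i) (Finset.mem_univ a)
    have hz : ∑ a, n a * (q - n a) = 0 := by
      have : ∑ a, n a * (q - n a) = (∑ a, n a) * q - ∑ a, (n a)^2 := by
        rw [Finset.sum_mul, ← Finset.sum_sub_distrib]
        exact Finset.sum_congr rfl (fun a _ => by ring)
      rw [this, h1, h2]; ring
    have hz' := (Finset.sum_eq_zero_iff_of_nonneg (fun a _ =>
      mul_nonneg (hnn a) (by have := hle a; linarith))).1 hz
    have : ∀ a, n a = 0 := by
      intro a
      rcases mul_eq_zero.1 (hz' a (Finset.mem_univ a)) with h | h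
      · exact h
      · exact absurd (by linarith) (hnq a)
    have : ∑ a, n a = 0 := Finset.sum_eq_zero (fun a _ => this a)
    omega
  refine ⟨hnq, ?_⟩
  obtain ⟨am, ham0, ham⟩ := hneg
  have hFs' : ∑ a ∈ F.erase 0, n a = q := by
    rw [← hFs, ← Finset.add_sum_erase F n hF0, h0, zero_add]
  have hFc : ((F.erase 0).card : ℤ) = q - 1 := by
    rw [Finset.card_erase_of_mem hF0, hF]; omega
  have hbig : ∃ b ∈ F.erase 0, 2 ≤ n b := by
    by_contra hcon
    push Not at hcon
    have : ∑ a ∈ F.erase 0, n a ≤ ∑ a ∈ F.erase 0, (1:ℤ) :=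
      Finset.sum_le_sum (fun a ha => by have := hcon a ha; omega)
    rw [hFs', Finset.sum_const, nsmul_eq_mul, hFc] at this
    linarith
  obtain ⟨b, hbF, hb2⟩ := hbig
  have hb0 : b ≠ 0 := (Finset.mem_erase.1 hbF).1
  by_cases hz : ∃ c, c ≠ 0 ∧ n c = 0
  · obtain ⟨c, hc0, hc⟩ := hz
    have hsub : ({-1, 0, n b} : Set ℤ) ⊆ n '' {a | a ≠ 0} := by
      rintro x (rfl | rfl | rfl)
      · exact ⟨am, ham0, ham⟩
      · exact ⟨c, hc0, hc⟩
      · exact ⟨b, hb0, rfl⟩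
    have h3c : ({-1, 0, n b} : Set ℤ).ncard = 3 := by
      rw [Set.ncard_eq_three]
      exact ⟨-1, 0, n b, by omega, by omega, by omega, rfl⟩
    have heq := Set.eq_of_subset_of_ncard_le hsub (by omega) (Set.toFinite _)
    have hall : ∀ a, n a = -1 ∨ n a = 0 ∨ n a = n b := by
      intro a
      by_cases ha : a = 0
      · right; left; rw [ha, h0]
      · have : n a ∈ n '' {a | a ≠ 0} := ⟨a, ha, rfl⟩
        rw [← heq] at this
        simpa using this
    refine ⟨n b, hb2, ?_, hall⟩
    rw [← hFs]
    apply Finset.dvd_sum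
    intro a ha
    rcases hall a with h | h | h
    · have := hFn a ha; omega
    · rw [h]; exact dvd_zero _
    · rw [h]
  · exfalso
    push Not at hz
    have hpos : ∀ a ∈ F.erase 0, 0 ≤ n a - 1 := by
      intro a ha
      have := hz a (Finset.mem_erase.1 ha).1
      have := hFn a (Finset.mem_erase.1 ha).2
      omega
    have hs1 : ∑ a ∈ F.erase 0, (n a - 1) = 1 := by
      rw [Finset.sum_sub_distrib, hFs', Finset.sum_const, nsmul_eq_mul, hFc]; ring
    have hb' : n b = 2 := by
      have := Finset.single_le_sum hpos hbF
      rw [hs1] at this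
      omega
    by_cases hq : q = 2
    · exact hnq b (by rw [hb', hq]; rfl)
    have hex : ∃ c ∈ (F.erase 0), c ≠ b := by
      apply Finset.exists_mem_ne
      omega
    obtain ⟨c, hcF, hcb⟩ := hex
    have hc1 : n c = 1 := by
      have hs := Finset.sum_le_sum_of_subset_of_nonneg (f := fun x => n x - 1)
        (s := {c, b}) (t := F.erase 0) (by
          intro x hx
          simp only [Finset.mem_insert, Finset.mem_singleton] at hx
          rcases hx with rfl | rfl <;> assumption) (fun i hi _ => hpos i hi)
      rw [Finset.sum_pair hcb, hs1] at hs
      have := hpos c hcF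
      omega
    have hsub : ({-1, 1, 2} : Set ℤ) ⊆ n '' {a | a ≠ 0} := by
      rintro x (rfl | rfl | rfl)
      · exact ⟨am, ham0, ham⟩
      · exact ⟨c, (Finset.mem_erase.1 hcF).1, hc1⟩
      · exact ⟨b, hb0, hb'⟩
    have h3c : ({-1, 1, 2} : Set ℤ).ncard = 3 := by
      rw [Set.ncard_eq_three]
      exact ⟨-1, 1, 2, by omega, by omega, by omega, rfl⟩
    have heq := Set.eq_of_subset_of_ncard_le hsub (by omega) (Set.toFinite _)
    have hd : (3:ℤ) ∣ ∑ a ∈ Finset.univ.erase (0:K), ((n a)^2 - 1) := by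
      apply Finset.dvd_sum
      intro a ha
      have : n a ∈ n '' {a | a ≠ 0} := ⟨a, (Finset.mem_erase.1 ha).1, rfl⟩
      rw [← heq] at this
      rcases this with h | h | h <;> rw [h] <;> norm_num
    have h2' : ∑ a ∈ Finset.univ.erase (0:K), ((n a)^2 - 1) = 1 := by
      have h := Finset.add_sum_erase Finset.univ (fun a => (n a)^2 - 1) (Finset.mem_univ (0:K))
      have h' : ∑ a, ((n a)^2 - 1) = 0 := by
        rw [Finset.sum_sub_distrib, h2, Finset.sum_const, nsmul_eq_mul, Finset.card_univ, hK]
        push_cast; ring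
      rw [h'] at h
      simp only [h0] at h
      linarith
    rw [h2'] at hd
    omega

noncomputable def nhU (K : Type) [Field K] [Fintype K] (q : ℕ) : Finset K :=
  Finset.univ.filter (fun u => u ^ (q+1) = 1)

noncomputable def nhc {K : Type} [Field K] (s : ℤ) (u : K) : K := u ^ s + u ^ (1 - s)

noncomputable def nhN {K : Type} [Field K] [Fintype K] (q : ℕ) (s : ℤ) (a : K) : Finset K :=
  (nhU K q).filter (fun u => nhc s u + a + a ^ q * u = 0)

noncomputable def nhL {K : Type} [Field K] [Fintype K] (q : ℕ) (s : ℤ) (u : K) : Finset K :=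
  Finset.univ.filter (fun a => nhc s u + a + a ^ q * u = 0)

section
variable {K : Type} [Field K] [Fintype K] {q : ℕ}

theorem nhU_mem {u : K} : u ∈ nhU K q ↔ u ^ (q+1) = 1 := by simp [nhU]

theorem nhU_ne {u : K} (h : u ∈ nhU K q) : u ≠ 0 := by
  rintro rfl
  simp [nhU_mem] at h

theorem nhU_pow {u : K} (h : u ∈ nhU K q) : u ^ q = u⁻¹ := by
  have := nhU_mem.1 h
  rw [pow_succ] at this
  exact eq_inv_of_mul_eq_one_left this

theorem nhU_zpow {u : K} (h : u ∈ nhU K q) (n : ℤ) : (u ^ n) ^ q = (u ^ n)⁻¹ := by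
  rw [← zpow_natCast, zpow_comm, zpow_natCast, nhU_pow h, inv_zpow]

theorem nhU_mul {u v : K} (h : u ∈ nhU K q) (h' : v ∈ nhU K q) : u * v ∈ nhU K q := by
  rw [nhU_mem] at *
  rw [mul_pow, h, h', one_mul]

theorem nhU_inv {u : K} (h : u ∈ nhU K q) : u⁻¹ ∈ nhU K q := by
  rw [nhU_mem] at *
  rw [inv_pow, h, inv_one]

theorem nhU_one : (1:K) ∈ nhU K q := by simp [nhU_mem]

theorem nhU_zmem {u : K} (h : u ∈ nhU K q) (n : ℤ) : u ^ n ∈ nhU K q := by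
  rw [nhU_mem] at *
  rw [← zpow_natCast, zpow_comm, zpow_natCast, h, one_zpow]

theorem nh_fib (hq2 : 2 ≤ q) (hK : Fintype.card K = q ^ 2) :
    (nhU K q).card = q + 1 ∧
    ∀ u ∈ nhU K q, (Finset.univ.filter (fun x : K => x ^ (q-1) = u)).card = q - 1 := by
  have hpos : 0 < q - 1 := by omega
  have hf : ∀ u : K, (Finset.univ.filter (fun x : K => x ^ (q-1) = u)).card ≤ q - 1 := by
    intro u
    refine le_trans ?_ (Polynomial.card_nthRoots (q-1) u)
    refine le_trans (Finset.card_le_card ?_) (Multiset.toFinset_card_le _)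
    intro x hx
    simp only [Finset.mem_filter, Finset.mem_univ, true_and] at hx
    simp [Polynomial.mem_nthRoots hpos, hx]
  have hU : (nhU K q).card ≤ q + 1 := by
    refine le_trans (Finset.card_le_card ?_) (le_trans (Multiset.toFinset_card_le _)
      (Polynomial.card_nthRoots (q+1) (1:K)))
    intro x hx
    simp [Polynomial.mem_nthRoots (Nat.succ_pos q), nhU_mem.1 hx]
  have hsum : ∑ u ∈ nhU K q, (Finset.univ.filter (fun x : K => x ^ (q-1) = u)).card
      = (q+1) * (q-1) := by
    have h1 : (Finset.univ.filter (fun x : K => x ≠ 0)).card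
      = ∑ u ∈ nhU K q, ((Finset.univ.filter (fun x : K => x ≠ 0)).filter
          (fun x : K => x ^ (q-1) = u)).card := by
      apply Finset.card_eq_sum_card_fiberwise
      intro x hx
      simp only [Finset.coe_filter, Finset.mem_univ, true_and, Set.mem_ofPred_eq] at hx
      rw [Finset.mem_coe, nhU_mem, ← pow_mul]
      have : (q-1)*(q+1) = Fintype.card K - 1 := by
        rw [hK, mul_comm, ← Nat.sq_sub_sq, one_pow]
      rw [this]
      exact FiniteField.pow_card_sub_one_eq_one x hx
    have h2 : (Finset.univ.filter (fun x : K => x ≠ 0)).card = (q+1)*(q-1) := by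
      rw [Finset.filter_ne', Finset.card_erase_of_mem (Finset.mem_univ _), Finset.card_univ, hK,
        ← Nat.sq_sub_sq, one_pow]
    rw [← h2, h1]
    apply Finset.sum_congr rfl
    intro u hu
    congr 1
    ext x
    simp only [Finset.mem_filter, Finset.mem_univ, true_and]
    constructor
    · rintro rfl
      refine ⟨?_, rfl⟩
      rintro rfl
      rw [zero_pow hpos.ne'] at hu
      exact nhU_ne hu rfl
    · exact fun h => h.2
  have hle : ∑ u ∈ nhU K q, (Finset.univ.filter (fun x : K => x ^ (q-1) = u)).card
      ≤ ∑ u ∈ nhU K q, (q - 1) := Finset.sum_le_sum (fun u _ => hf u)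
  have hcard : (nhU K q).card = q + 1 := by
    refine le_antisymm hU ?_
    rw [hsum, Finset.sum_const, smul_eq_mul] at hle
    exact Nat.le_of_mul_le_mul_right hle hpos
  refine ⟨hcard, ?_⟩
  apply (Finset.sum_eq_sum_iff_of_le (fun u _ => hf u)).1
  rw [hsum, Finset.sum_const, hcard, smul_eq_mul]

theorem nhc_pow {s : ℤ} {u : K} (hadd : ∀ a b : K, (a+b)^q = a^q + b^q) (hu : u ∈ nhU K q) :
    nhc s u ^ q * u = nhc s u := by
  have h0 := nhU_ne hu
  rw [nhc, hadd, nhU_zpow hu, nhU_zpow hu, ← zpow_neg, ← zpow_neg, add_mul,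
    ← zpow_add_one₀ h0, ← zpow_add_one₀ h0, add_comm]
  congr 2 <;> ring

theorem nh_inter {s : ℤ} {u v : K} (hadd : ∀ a b : K, (a+b)^q = a^q + b^q)
    (hu : u ∈ nhU K q) (hv : v ∈ nhU K q) (huv : u ≠ v) :
    nhL q s u ∩ nhL q s v = {(u * nhc s v - v * nhc s u) / (v - u)} := by
  have hne : v - u ≠ 0 := sub_ne_zero.2 huv.symm
  have hu0 := nhU_ne hu
  have hv0 := nhU_ne hv
  have hmul : ∀ a b : K, (a*b)^q = a^q * b^q := fun a b => mul_pow a b q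
  have h0q : (0:K)^q = 0 := by have := hadd 0 0; simpa using this
  have hneg : ∀ a : K, (-a)^q = -a^q := by
    intro a
    have := hadd a (-a)
    rw [add_neg_cancel, h0q] at this
    exact eq_neg_of_add_eq_zero_right this.symm
  have hsub : ∀ a b : K, (a-b)^q = a^q - b^q := by
    intro a b
    rw [sub_eq_add_neg, hadd, hneg, sub_eq_add_neg]
  have hcu := nhc_pow (s := s) hadd hu
  have hcv := nhc_pow (s := s) hadd hv
  have hcu' : nhc s u ^ q = nhc s u / u := by rw [eq_div_iff hu0, hcu]
  have hcv' : nhc s v ^ q = nhc s v / v := by rw [eq_div_iff hv0, hcv]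
  ext a
  simp only [Finset.mem_inter, nhL, Finset.mem_filter, Finset.mem_univ, true_and,
    Finset.mem_singleton]
  constructor
  · rintro ⟨h1, h2⟩
    rw [eq_div_iff hne]
    linear_combination v * h1 - u * h2
  · intro h
    have hne' : u⁻¹ - v⁻¹ ≠ 0 := sub_ne_zero.2 (fun h => huv (inv_injective h))
    have hne'' : v⁻¹ - u⁻¹ ≠ 0 := sub_ne_zero.2 (fun h => huv (inv_injective h).symm)
    have haq : a ^ q = (nhc s v - nhc s u) / (u - v) := by
      rw [h, div_pow, hsub, hsub, hmul, hmul, hcu', hcv', nhU_pow hu, nhU_pow hv]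
      have : u - v ≠ 0 := sub_ne_zero.2 huv
      rw [div_eq_div_iff hne'' this]
      field_simp
    have : u - v ≠ 0 := sub_ne_zero.2 huv
    rw [haq, h]
    constructor <;> (field_simp; ring)

theorem nh_line {s : ℤ} {v : K} (hadd : ∀ a b : K, (a+b)^q = a^q + b^q)
    (hU : (nhU K q).card = q + 1) (hv : v ∈ nhU K q) :
    ∑ a ∈ nhL q s v, (((nhN q s a).card : ℤ) - 1) = q := by
  have h1 : ∑ a ∈ nhL q s v, ((nhN q s a).card : ℤ)
      = ∑ u ∈ nhU K q, ((nhL q s u ∩ nhL q s v).card : ℤ) := by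
    have hN : ∀ a : K, ((nhN q s a).card : ℤ)
        = ∑ u ∈ nhU K q, if a ∈ nhL q s u then 1 else 0 := by
      intro a
      simp [nhN, nhL]
    have hI : ∀ u : K, ((nhL q s u ∩ nhL q s v).card : ℤ)
        = ∑ a ∈ nhL q s v, if a ∈ nhL q s u then 1 else 0 := by
      intro u
      rw [Finset.inter_comm, ← Finset.filter_mem_eq_inter, Finset.card_filter]
      push_cast
      rfl
    simp only [hN, hI]
    rw [Finset.sum_comm]
  rw [Finset.sum_sub_distrib, h1, ← Finset.add_sum_erase _ _ hv, Finset.inter_self]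
  have h2 : ∑ u ∈ (nhU K q).erase v, ((nhL q s u ∩ nhL q s v).card : ℤ)
      = ∑ u ∈ (nhU K q).erase v, (1:ℤ) := by
    apply Finset.sum_congr rfl
    intro u hu
    rw [Finset.mem_erase] at hu
    rw [nh_inter hadd hu.2 hv hu.1]
    simp
  rw [h2]
  simp [Finset.card_erase_of_mem hv, hU]

theorem nh_pairs {s : ℤ} (hadd : ∀ a b : K, (a+b)^q = a^q + b^q)
    (hU : (nhU K q).card = q + 1) :
    ∑ a : K, ((nhN q s a).card : ℤ) * (((nhN q s a).card : ℤ) - 1) = (q+1) * q := by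
  have h : ∑ v ∈ nhU K q, ∑ a ∈ nhL q s v, (((nhN q s a).card : ℤ) - 1) = (q+1)*q := by
    rw [Finset.sum_congr rfl (fun v hv => nh_line hadd hU hv)]
    simp [hU]
  rw [← h]
  simp only [nhL, Finset.sum_filter]
  rw [Finset.sum_comm]
  apply Finset.sum_congr rfl
  intro a _
  rw [← Finset.sum_filter, Finset.sum_const, nsmul_eq_mul]
  rfl
end
set_option linter.unusedSectionVars false
section
variable {K : Type} [Field K] [Fintype K] {q : ℕ}

theorem nh_geom (hadd : ∀ a b : K, (a+b)^q = a^q + b^q) (h2 : (2:K) = 0) (hq0 : (q:K) = 0)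
    (hq2 : 2 ≤ q) (x y : K) :
    (x + y)^(q-1) = ∑ i ∈ Finset.range q, x ^ i * y ^ (q - 1 - i) := by
  have hxy : x - y = x + y := by linear_combination (-y) * h2
  by_cases h : x + y = 0
  · have : x = y := by rw [← sub_eq_zero, hxy, h]
    subst this
    rw [h, zero_pow (by omega)]
    symm
    have : ∀ i ∈ Finset.range q, x ^ i * x ^ (q-1-i) = x^(q-1) := by
      intro i hi
      rw [Finset.mem_range] at hi
      rw [← pow_add]; congr 1; omega
    rw [Finset.sum_congr rfl this]
    simp [hq0]
  · have h1 := (Commute.all x y).geom_sum₂_mul q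
    rw [hxy] at h1
    apply mul_right_cancel₀ h
    rw [h1, ← pow_succ, show q - 1 + 1 = q by omega, hadd]
    linear_combination (y^q) * h2

theorem nh_vand (A : Finset K) (w ρ : K → K) (N : ℕ) (hA : A.card ≤ N)
    (hinj : ∀ x ∈ A, ∀ y ∈ A, ρ x = ρ y → x = y) (h0 : ∀ x ∈ A, ρ x ≠ 0)
    (hs : ∀ i, 1 ≤ i → i ≤ N → ∑ z ∈ A, w z * ρ z ^ i = 0) : ∀ x ∈ A, w x = 0 := by
  intro x hx
  let P : Polynomial K := ∏ z ∈ A.erase x, (Polynomial.X - Polynomial.C (ρ z))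
  have hdeg : P.natDegree < N := by
    have : P.natDegree = (A.erase x).card := by
      simp only [P]
      rw [Polynomial.natDegree_prod_of_monic _ _ (fun z _ => Polynomial.monic_X_sub_C _)]
      simp
    rw [this, Finset.card_erase_of_mem hx]
    have := Finset.card_pos.2 ⟨x, hx⟩
    omega
  have h1 : ∑ z ∈ A, w z * (ρ z * P.eval (ρ z)) = 0 := by
    have : ∀ z ∈ A, w z * (ρ z * P.eval (ρ z))
        = ∑ i ∈ Finset.range N, P.coeff i * (w z * ρ z ^ (i+1)) := by
      intro z _
      rw [Polynomial.eval_eq_sum_range' hdeg, Finset.mul_sum, Finset.mul_sum]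
      apply Finset.sum_congr rfl
      intro i _
      ring
    rw [Finset.sum_congr rfl this, Finset.sum_comm]
    apply Finset.sum_eq_zero
    intro i hi
    rw [Finset.mem_range] at hi
    rw [← Finset.mul_sum, hs (i+1) (by omega) (by omega), mul_zero]
  rw [Finset.sum_eq_single_of_mem x hx] at h1
  · rcases mul_eq_zero.1 h1 with h | h
    · exact h
    · exfalso
      rcases mul_eq_zero.1 h with h | h
      · exact h0 x hx h
      · simp only [P, Polynomial.eval_prod, Finset.prod_eq_zero_iff] at h
        obtain ⟨z, hz, h⟩ := h
        rw [Finset.mem_erase] at hz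
        simp [sub_eq_zero] at h
        exact hz.1 (hinj x hx z hz.2 h).symm
  · intro z hz hzx
    have : P.eval (ρ z) = 0 := by
      simp only [P, Polynomial.eval_prod]
      apply Finset.prod_eq_zero (Finset.mem_erase.2 ⟨hzx, hz⟩)
      simp
    rw [this]; ring

theorem nh_linepow {s : ℤ} (hadd : ∀ a b : K, (a+b)^q = a^q + b^q) (h2 : (2:K) = 0)
    (hN : ∀ a : K, (nhN q s a).card = 0 ∨ Odd (nhN q s a).card) {v : K} (hv : v ∈ nhU K q) 
    (g : K → K) :
    ∑ u ∈ (nhU K q).erase v, g ((u * nhc s v - v * nhc s u) / (v - u)) = 0 := by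
  have hmem : ∀ u ∈ (nhU K q).erase v, ∀ a ∈ nhL q s v,
      ((u * nhc s v - v * nhc s u) / (v - u) = a ↔ u ∈ nhN q s a) := by
    intro u hu a ha
    rw [Finset.mem_erase] at hu
    have h := nh_inter (s := s) hadd hu.2 hv hu.1
    have h' : a ∈ nhL q s u ∩ nhL q s v ↔ a = (u * nhc s v - v * nhc s u) / (v - u) := by
      rw [h, Finset.mem_singleton]
    rw [eq_comm, ← h', Finset.mem_inter]
    simp only [ha, and_true, nhN, Finset.mem_filter, hu.2, true_and]
    simp [nhL]
  have hmaps : ∀ u ∈ (nhU K q).erase v,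
      (u * nhc s v - v * nhc s u) / (v - u) ∈ nhL q s v := by
    intro u hu
    rw [Finset.mem_erase] at hu
    have h := nh_inter (s := s) hadd hu.2 hv hu.1
    have : (u * nhc s v - v * nhc s u) / (v - u) ∈ nhL q s u ∩ nhL q s v := by
      rw [h]; simp
    exact (Finset.mem_inter.1 this).2
  rw [← Finset.sum_fiberwise_of_maps_to hmaps]
  apply Finset.sum_eq_zero
  intro a ha
  have hva : v ∈ nhN q s a := by
    simp only [nhN, Finset.mem_filter, hv, true_and]
    simpa [nhL] using ha
  have hset : ((nhU K q).erase v).filter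
      (fun u => (u * nhc s v - v * nhc s u) / (v - u) = a) = (nhN q s a).erase v := by
    ext u
    simp only [Finset.mem_filter, Finset.mem_erase]
    constructor
    · rintro ⟨h1, h3⟩
      exact ⟨h1.1, (hmem u (Finset.mem_erase.2 h1) a ha).1 h3⟩
    · rintro ⟨h1, h3⟩
      have hu : u ∈ nhU K q := (Finset.mem_filter.1 h3).1
      exact ⟨⟨h1, hu⟩, (hmem u (Finset.mem_erase.2 ⟨h1, hu⟩) a ha).2 h3⟩
  have hc : ∑ u ∈ ((nhU K q).erase v).filter
      (fun u => (u * nhc s v - v * nhc s u) / (v - u) = a),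
        g ((u * nhc s v - v * nhc s u) / (v - u)) = ∑ u ∈ (nhN q s a).erase v, g a := by
    rw [← hset]
    apply Finset.sum_congr rfl
    intro u hu
    rw [(Finset.mem_filter.1 hu).2]
  rw [hc, Finset.sum_const, Finset.card_erase_of_mem hva]
  rcases hN a with h | ⟨k, h⟩
  · rw [Finset.card_eq_zero.1 h] at hva; simp at hva
  · rw [h, nsmul_eq_mul]
    push_cast [Nat.add_sub_cancel]
    rw [h2]; ring

noncomputable def nhal (s : ℤ) (z : K) : K := (z ^ s + z) / (1 + z)

theorem nhal_pow {s : ℤ} (hadd : ∀ a b : K, (a+b)^q = a^q + b^q) {z : K} (hz : z ∈ nhU K q)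
    (h1 : 1 + z ≠ 0) :
    nhal s z ^ q = z ^ (-s) * nhal s z := by
  have h0 := nhU_ne hz
  have hi : 1 + z⁻¹ ≠ 0 := by
    intro h
    apply h1
    have : z * (1 + z⁻¹) = 0 := by rw [h, mul_zero]
    rw [mul_add, mul_inv_cancel₀ h0, mul_one] at this
    rw [add_comm]; exact this
  have hs : z ^ s ≠ 0 := zpow_ne_zero _ h0
  rw [nhal, div_pow, hadd, hadd, one_pow, nhU_zpow hz, nhU_pow hz, zpow_neg]
  generalize z ^ s = A at hs
  have e : (1 + z⁻¹) = (1 + z) / z := by field_simp; ring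
  rw [e]
  field_simp
  ring

theorem nh_coef {s : ℤ} (hadd : ∀ a b : K, (a+b)^q = a^q + b^q) (h2 : (2:K) = 0)
    (hq0 : (q:K) = 0) (hq2 : 2 ≤ q) (hU : (nhU K q).card = q + 1)
    (hinj : ∀ u ∈ nhU K q, u ^ (2*s-1) = 1 → u = 1)
    (hN : ∀ a : K, (nhN q s a).card = 0 ∨ Odd (nhN q s a).card) :
    ∀ i < q, ∑ z ∈ (nhU K q).erase 1, nhal (1-s) z ^ i * nhal s z ^ (q-1-i) = 0 := by
  have hsub : ∀ x y : K, x - y = x + y := fun x y => by linear_combination (-y) * h2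
  have hstep : ∀ v ∈ nhU K q,
      ∑ z ∈ (nhU K q).erase 1, (v ^ (1-2*s) * nhal (1-s) z + nhal s z)^(q-1) = 0 := by
    intro v hv
    have hv0 := nhU_ne hv
    have h := nh_linepow hadd h2 hN hv (fun a => (v ^ (-s) * a)^(q-1))
    rw [← h]
    refine Finset.sum_bij (fun z _ => v * z) ?_ ?_ ?_ ?_
    · intro z hz
      rw [Finset.mem_erase] at hz ⊢
      refine ⟨?_, nhU_mul hv hz.2⟩
      intro h
      exact hz.1 (by simpa [hv0] using h)
    · intro a _ b _ hab
      exact mul_left_cancel₀ hv0 hab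
    · intro u hu
      rw [Finset.mem_erase] at hu
      refine ⟨v⁻¹ * u, ?_, by field_simp⟩
      rw [Finset.mem_erase]
      refine ⟨?_, nhU_mul (nhU_inv hv) hu.2⟩
      intro h
      apply hu.1
      field_simp at h
      exact h
    · intro z hz
      rw [Finset.mem_erase] at hz
      have hz1 : 1 + z ≠ 0 := by
        rw [← hsub]; exact sub_ne_zero.2 hz.1.symm
      congr 1
      have hvs : v ^ s ≠ 0 := zpow_ne_zero _ hv0
      have e1 : v ^ (1 - 2*s) = v * (v^s)⁻¹ * (v^s)⁻¹ := by
        rw [show (1 - 2*s) = 1 + -s + -s by ring, zpow_add₀ hv0, zpow_add₀ hv0, zpow_neg, zpow_one]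
      have e2 : v ^ (1 - s) = v * (v^s)⁻¹ := by
        rw [sub_eq_add_neg, zpow_add₀ hv0, zpow_neg, zpow_one]
      have e3 : v - v * z = v * (1 + z) := by rw [hsub]; ring
      rw [e3, hsub, nhal, nhal, nhc, nhc, mul_zpow, mul_zpow, e1, e2, zpow_neg]
      generalize v ^ s = A at hvs
      generalize z ^ s = B
      generalize z ^ (1-s) = C
      field_simp
      ring
  let P : Polynomial K := ∑ i ∈ Finset.range q, Polynomial.C
    (∑ z ∈ (nhU K q).erase 1, nhal (1-s) z ^ i * nhal s z ^ (q-1-i)) * Polynomial.X ^ i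
  have hroot : ∀ v ∈ nhU K q, P.eval v = 0 := by
    have himg : (nhU K q).image (fun v => v ^ (1-2*s)) = nhU K q := by
      apply Finset.eq_of_subset_of_card_le
      · intro x hx
        rw [Finset.mem_image] at hx
        obtain ⟨v, hv, rfl⟩ := hx
        exact nhU_zmem hv _
      · rw [Finset.card_image_of_injOn]
        intro a ha b hb hab
        simp only at hab
        have ha0 := nhU_ne ha
        have hb0 := nhU_ne hb
        have : (b * a⁻¹) ^ (2*s-1) = 1 := by
          rw [show (2*s-1) = -(1-2*s) by ring, zpow_neg, mul_zpow, inv_zpow, ← hab,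
            mul_inv_cancel₀ (zpow_ne_zero _ ha0), inv_one]
        have := hinj _ (nhU_mul hb (nhU_inv ha)) this
        field_simp at this
        exact this.symm
    intro x hx
    rw [← himg, Finset.mem_image] at hx
    obtain ⟨v, hv, rfl⟩ := hx
    rw [← hstep v hv]
    simp only [P, Polynomial.eval_finsetSum, Polynomial.eval_mul, Polynomial.eval_C,
      Polynomial.eval_pow, Polynomial.eval_X, Finset.sum_mul]
    rw [Finset.sum_comm]
    apply Finset.sum_congr rfl
    intro z _
    rw [nh_geom hadd h2 hq0 hq2]
    apply Finset.sum_congr rfl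
    intro i _
    rw [mul_pow]; ring
  have hdeg : P.natDegree ≤ q := by
    apply Polynomial.natDegree_sum_le_of_forall_le
    intro i hi
    rw [Finset.mem_range] at hi
    exact (Polynomial.natDegree_C_mul_X_pow_le _ _).trans hi.le
  have hP : P = 0 := Polynomial.eq_zero_of_natDegree_lt_card_of_eval_eq_zero' P (nhU K q)
    hroot (by rw [hU]; omega)
  intro i hi
  have : P.coeff i = ∑ z ∈ (nhU K q).erase 1, nhal (1-s) z ^ i * nhal s z ^ (q-1-i) := by
    simp only [P, Polynomial.finsetSum_coeff, Polynomial.coeff_C_mul_X_pow]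
    rw [Finset.sum_ite_eq]
    simp [hi]
  rw [← this, hP, Polynomial.coeff_zero]

theorem nh_even {s : ℤ} (hadd : ∀ a b : K, (a+b)^q = a^q + b^q) (h2 : (2:K) = 0)
    (hq0 : (q:K) = 0) (hq2 : 2 ≤ q) (hU : (nhU K q).card = q + 1)
    (hinj : ∀ u ∈ nhU K q, u ^ (2*s-1) = 1 → u = 1)
    (hN : ∀ a : K, (nhN q s a).card = 0 ∨ Odd (nhN q s a).card) :
    (∀ z ∈ nhU K q, z ^ s = 1) ∨ (∀ z ∈ nhU K q, z ^ (s-1) = 1) := by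
  have hco := nh_coef hadd h2 hq0 hq2 hU hinj hN
  have hsub : ∀ x y : K, x - y = x + y := fun x y => by linear_combination (-y) * h2
  have h1z : ∀ z : K, z ≠ 1 → 1 + z ≠ 0 := by
    intro z hz
    rw [← hsub]; exact sub_ne_zero.2 hz.symm
  have hal : ∀ t : ℤ, ∀ z ∈ nhU K q, z ≠ 1 → (nhal t z = 0 ↔ z ^ (t-1) = 1) := by
    intro t z hz hz1
    have h0 := nhU_ne hz
    rw [nhal, div_eq_zero_iff, or_iff_left (h1z z hz1), ← hsub, sub_eq_zero,
      zpow_sub_one₀ h0, mul_inv_eq_one₀ h0]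
  by_contra hcon
  push Not at hcon
  obtain ⟨⟨z1, hz1, hz1s⟩, ⟨z2, hz2, hz2s⟩⟩ := hcon
  -- the good set
  let A : Finset K := (nhU K q).filter (fun z => z ^ s ≠ 1 ∧ z ^ (s-1) ≠ 1)
  have hAne : A.Nonempty := by
    by_cases c1 : z1 ^ (s-1) = 1
    · by_cases c2 : z2 ^ s = 1
      · refine ⟨z1 * z2, ?_⟩
        simp only [A, Finset.mem_filter]
        refine ⟨nhU_mul hz1 hz2, ?_, ?_⟩
        · rw [mul_zpow, c2, mul_one]; exact hz1s
        · rw [mul_zpow, c1, one_mul]; exact hz2s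
      · exact ⟨z2, by simp only [A, Finset.mem_filter]; exact ⟨hz2, c2, hz2s⟩⟩
    · exact ⟨z1, by simp only [A, Finset.mem_filter]; exact ⟨hz1, hz1s, c1⟩⟩
  have hA1 : ∀ z ∈ A, z ≠ 1 := by
    rintro z hz rfl
    simp [A] at hz
  have hAU : ∀ z ∈ A, z ∈ nhU K q := fun z hz => (Finset.mem_filter.1 hz).1
  have hAal : ∀ z ∈ A, nhal s z ≠ 0 := by
    intro z hz
    rw [Ne, hal s z (hAU z hz) (hA1 z hz)]
    exact (Finset.mem_filter.1 hz).2.2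
  have hAbe : ∀ z ∈ A, nhal (1-s) z ≠ 0 := by
    intro z hz
    rw [Ne, hal _ z (hAU z hz) (hA1 z hz), show 1 - s - 1 = -s by ring, zpow_neg, inv_eq_one]
    exact (Finset.mem_filter.1 hz).2.1
  have halp : ∀ z ∈ nhU K q, z ≠ 1 → nhal s z ≠ 0 → nhal s z ^ (q-1) = z ^ (-s) := by
    intro z hz hz1 h
    have := nhal_pow (s := s) hadd hz (h1z z hz1)
    rw [show q = q - 1 + 1 by omega, pow_succ] at this
    exact mul_right_cancel₀ h this
  by_cases hg : ∃ z ∈ nhU K q, z ≠ 1 ∧ (z ^ s = 1 ∨ z ^ (s-1) = 1)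
  · obtain ⟨z, hz, hz1, hzz⟩ := hg
    have h0 := nhU_ne hz
    have hcard : A.card ≤ q - 2 := by
      have hzi : z ≠ z⁻¹ := by
        intro h
        have h' : z * z = 1 := by nth_rewrite 2 [h]; exact mul_inv_cancel₀ h0
        have : (z - 1) * (z - 1) = 0 := by linear_combination h' - (z - 1) * h2
        exact hz1 (sub_eq_zero.1 (mul_self_eq_zero.1 this))
      have hsubs : A ⊆ (((nhU K q).erase 1).erase z).erase z⁻¹ := by
        intro x hx
        simp only [Finset.mem_erase]
        refine ⟨?_, ?_, hA1 x hx, hAU x hx⟩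
        · rintro rfl
          have := (Finset.mem_filter.1 hx).2
          simp only [inv_zpow, ne_eq, inv_eq_one] at this
          tauto
        · rintro rfl
          have := (Finset.mem_filter.1 hx).2
          tauto
      refine (Finset.card_le_card hsubs).trans ?_
      rw [Finset.card_erase_of_mem, Finset.card_erase_of_mem, Finset.card_erase_of_mem nhU_one, hU]
      · omega
      · simp [hz, hz1]
      · simp [nhU_inv hz, hz1, hzi.symm]
    obtain ⟨x, hx⟩ := hAne
    have := nh_vand A (fun z => z ^ (-s)) (fun z => nhal (1-s) z / nhal s z) (q-2) hcard ?_ ?_ ?_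
      x hx
    · exact zpow_ne_zero _ (nhU_ne (hAU x hx)) this
    · intro x hx y hy hxy
      have hr : ∀ z ∈ A, (nhal (1-s) z / nhal s z)^q = z ^ (2*s-1) * (nhal (1-s) z / nhal s z) := by
        intro z hz
        have hz0 := nhU_ne (hAU z hz)
        rw [div_pow, nhal_pow hadd (hAU z hz) (h1z z (hA1 z hz)),
          nhal_pow hadd (hAU z hz) (h1z z (hA1 z hz)), mul_div_mul_comm, ← zpow_sub₀ hz0]
        congr 2
        ring
      have e := hr x hx
      rw [hxy, hr y hy] at e
      have e' := mul_right_cancel₀ (div_ne_zero (hAbe y hy) (hAal y hy)) e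
      have hx0 := nhU_ne (hAU x hx)
      have hy0 := nhU_ne (hAU y hy)
      have h3 := hinj (x * y⁻¹) (nhU_mul (hAU x hx) (nhU_inv (hAU y hy))) (by
        rw [mul_zpow, inv_zpow, e', mul_inv_cancel₀ (zpow_ne_zero _ hx0)])
      exact (mul_inv_eq_one₀ hy0).1 h3
    · intro z hz
      exact div_ne_zero (hAbe z hz) (hAal z hz)
    · intro i hi1 hi2
      rw [← hco i (by omega)]
      apply Finset.sum_subset_zero_on_sdiff
      · intro z hz
        exact Finset.mem_erase.2 ⟨hA1 z hz, hAU z hz⟩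
      · intro z hz
        rw [Finset.mem_sdiff, Finset.mem_erase] at hz
        by_cases c : nhal s z = 0
        · rw [c, zero_pow (by omega), mul_zero]
        · have : nhal (1-s) z = 0 := by
            rw [hal _ z hz.1.2 hz.1.1, show 1 - s - 1 = -s by ring, zpow_neg, inv_eq_one]
            rw [hal s z hz.1.2 hz.1.1] at c
            by_contra c'
            exact hz.2 (Finset.mem_filter.2 ⟨hz.1.2, c', c⟩)
          rw [this, zero_pow (by omega), zero_mul]
      · intro z hz
        have hz' := hAal z hz
        have : nhal s z ^ (q-1) = nhal s z ^ (q-1-i) * nhal s z ^ i := by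
          rw [← pow_add]; congr 1; omega
        rw [← halp z (hAU z hz) (hA1 z hz) hz', this, div_pow]
        field_simp
  · push Not at hg
    have h := hco 0 (by omega)
    have h' : ∑ z ∈ (nhU K q).erase 1, z ^ (-s) = 0 := by
      rw [← h]
      apply Finset.sum_congr rfl
      intro z hz
      rw [Finset.mem_erase] at hz
      rw [pow_zero, one_mul, Nat.sub_zero, halp z hz.2 hz.1]
      rw [Ne, hal s z hz.2 hz.1]
      exact (hg z hz.2 hz.1).2
    have htot : ∑ z ∈ nhU K q, z ^ (-s) = 0 := by
      have hm : ∑ z ∈ nhU K q, z ^ (-s) = z1 ^ (-s) * ∑ z ∈ nhU K q, z ^ (-s) := by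
        have h10 := nhU_ne hz1
        rw [Finset.mul_sum]
        refine Finset.sum_bij (fun z _ => z1⁻¹ * z) ?_ ?_ ?_ ?_
        · intro z hz; exact nhU_mul (nhU_inv hz1) hz
        · intro a _ b _ hab; exact mul_left_cancel₀ (inv_ne_zero h10) hab
        · intro u hu
          exact ⟨z1 * u, nhU_mul hz1 hu, by field_simp⟩
        · intro z hz
          rw [← mul_zpow, mul_inv_cancel_left₀ h10]
      have h3 : (z1 ^ (-s) - 1) * ∑ z ∈ nhU K q, z ^ (-s) = 0 := by
        rw [sub_mul, ← hm]; ring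
      rcases mul_eq_zero.1 h3 with h4 | h4
      · exfalso
        rw [sub_eq_zero, zpow_neg, inv_eq_one] at h4
        exact hz1s h4
      · exact h4
    rw [← Finset.add_sum_erase _ _ nhU_one, h', one_zpow] at htot
    simp at htot
end
set_option linter.unusedSectionVars false
section
variable {K : Type} [Field K] [Fintype K] {q : ℕ}

theorem nh_neg1 : (-1:K) ^ (q+1) = 1 ∨ (-1:K)^q = 1 := by
  rcases neg_one_pow_eq_or K q with h | h
  · right; exact h
  · left; rw [pow_succ, h]; ring

theorem nhU_neg (hadd : ∀ a b : K, (a+b)^q = a^q + b^q) : (-1:K) ∈ nhU K q := by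
  have h0q : (0:K)^q = 0 := by have := hadd 0 0; simpa using this
  have := hadd 1 (-1)
  rw [add_neg_cancel, h0q, one_pow] at this
  rw [nhU_mem, pow_succ]
  linear_combination this

theorem nhc_neg (s : ℤ) : nhc s (-1:K) = 0 := by
  have h : (-1:K) ≠ 0 := by simp
  rw [nhc, zpow_sub₀ h, zpow_one]
  have : ((-1:K)^s) * ((-1:K)^s) = 1 := by
    rw [← mul_zpow]; simp
  have hne : (-1:K)^s ≠ 0 := zpow_ne_zero _ h
  field_simp
  linear_combination this

theorem nh_odd {s : ℤ} (h2 : (2:K) ≠ 0) (hadd : ∀ a b : K, (a+b)^q = a^q + b^q)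
    {a : K} (ha : a ^ q = a) (ha1 : a ≠ -1) :
    Even ((nhN q s a).card - 1) := by
  have hm : (-1:K) ∈ nhN q s a := by
    simp only [nhN, Finset.mem_filter]
    refine ⟨nhU_neg hadd, ?_⟩
    rw [nhc_neg, ha]; ring
  rw [← Finset.card_erase_of_mem hm, ← ZMod.natCast_eq_zero_iff_even]
  have : ∑ u ∈ (nhN q s a).erase (-1), (1 : ZMod 2) = 0 := by
    apply Finset.sum_involution (fun u _ => u⁻¹)
    · intro u _; decide
    · intro u hu _ hcon
      rw [Finset.mem_erase, nhN, Finset.mem_filter] at hu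
      obtain ⟨hu1, huU, hu2⟩ := hu
      have h0 := nhU_ne huU
      have h' : u * u = 1 := by nth_rewrite 1 [← hcon]; exact inv_mul_cancel₀ h0
      rcases mul_self_eq_one_iff.1 h' with h | h
      · subst h
        simp only [nhc, one_zpow] at hu2
        apply ha1
        rw [ha] at hu2
        have : (2:K) * (a + 1) = 0 := by linear_combination hu2
        rcases mul_eq_zero.1 this with h | h
        · exact absurd h h2
        · linear_combination h
      · exact hu1 h
    · intro u _; simp
    · intro u hu
      rw [Finset.mem_erase, nhN, Finset.mem_filter] at hu ⊢
      obtain ⟨hu1, huU, hu2⟩ := hu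
      have h0 := nhU_ne huU
      refine ⟨?_, nhU_inv huU, ?_⟩
      · intro h
        apply hu1
        rw [← inv_inv u, h]; norm_num
      · rw [ha] at hu2 ⊢
        have e : nhc s u⁻¹ = nhc s u * u⁻¹ := by
          rw [nhc, nhc, inv_zpow, inv_zpow, ← zpow_neg, ← zpow_neg, add_mul, ← zpow_sub_one₀ h0,
            ← zpow_sub_one₀ h0, add_comm]
          congr 2 <;> ring
        rw [e]
        have : nhc s u * u⁻¹ + a + a * u⁻¹ = (nhc s u + a + a * u) * u⁻¹ := by
          field_simp
          ring
        rw [this, hu2, zero_mul]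
  simpa using this

theorem nh_zero {s : ℤ} (hq2 : 2 ≤ q) (hadd : ∀ a b : K, (a+b)^q = a^q + b^q)
    (hinj : ∀ u ∈ nhU K q, u ^ (2*s-1) = 1 → u = 1) : (nhN q s (0:K)).card = 1 := by
  rw [Finset.card_eq_one]
  refine ⟨-1, ?_⟩
  ext u
  simp only [nhN, Finset.mem_filter, Finset.mem_singleton]
  rw [zero_pow (by omega)]
  constructor
  · rintro ⟨hu, h⟩
    have h0 := nhU_ne hu
    have hs : u ^ s ≠ 0 := zpow_ne_zero _ h0
    have h1 := hinj (-1 * u) (nhU_mul (nhU_neg hadd) hu) (by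
      rw [mul_zpow, (show Odd (2*s-1) from ⟨s-1, by ring⟩).neg_one_zpow]
      rw [nhc, zpow_sub₀ h0, zpow_one] at h
      rw [zpow_sub_one₀ h0, two_mul, zpow_add₀ h0]
      field_simp at h ⊢
      linear_combination -h)
    linear_combination -h1
  · rintro rfl
    exact ⟨nhU_neg hadd, by rw [nhc_neg]; ring⟩

theorem nh_weil {s : ℤ} (hq2 : 2 ≤ q) (hK : Fintype.card K = q ^ 2)
    (hadd : ∀ a b : K, (a+b)^q = a^q + b^q) (Ψ : AddChar K ℂ)
    (hΨ : ∀ c : K, ∑ z, Ψ (z * c) = if c = 0 then (q:ℂ)^2 else 0)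
    (hfr : ∀ x, Ψ (x ^ q) = Ψ x) (d : ℤ) (hd : d = 1 + s * (q - 1)) (hd0 : d ≠ 0) (a : K) :
    ∑ x, Ψ (x ^ d + a * x) = q * (((nhN q s a).card : ℂ) - 1) := by
  obtain ⟨hU, hfib⟩ := nh_fib hq2 hK
  have hqq : ∀ x : K, (x^q)^q = x := by
    intro x
    rw [← pow_mul, ← sq, ← hK, FiniteField.pow_card]
  have hsplit : ∀ x : K, x ≠ 0 → x ^ d = x * (x^(q-1))^s := by
    intro x hx
    rw [hd, zpow_add₀ hx, zpow_one, mul_comm s, zpow_mul]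
    congr 2
    rw [← zpow_natCast]
    congr 1
    push_cast [Nat.cast_sub (show 1 ≤ q by omega)]
    ring
  let X : Finset K := Finset.univ.erase 0
  have hXmem : ∀ x, x ∈ X ↔ x ≠ 0 := by intro x; simp [X]
  have hXc : (X.card : ℂ) = (q:ℂ)^2 - 1 := by
    simp only [X]
    rw [Finset.card_erase_of_mem (Finset.mem_univ _), Finset.card_univ, hK,
      Nat.cast_sub (Nat.one_le_pow _ _ (by omega))]
    push_cast; ring
  set W := ∑ x, Ψ (x ^ d + a * x) with hW
  have hW1 : ∑ x ∈ X, Ψ (x ^ d + a * x) = W - 1 := by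
    rw [hW, ← Finset.add_sum_erase Finset.univ _ (Finset.mem_univ (0:K))]
    simp [zero_zpow _ hd0, X]
  let b : K → K := fun x => x ^ d + a * x
  have hb : ∀ x, b x = x ^ d + a * x := fun x => rfl
  -- trace vanishing criterion
  have hT : ∀ x ∈ X, (b x + b x ^ q = 0 ↔ x^(q-1) ∈ nhN q s a) := by
    intro x hx
    rw [hXmem] at hx
    have hu : x^(q-1) ∈ nhU K q := by
      rw [nhU_mem, ← pow_mul]
      have : (q-1)*(q+1) = Fintype.card K - 1 := by
        rw [hK, mul_comm, ← Nat.sq_sub_sq, one_pow]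
      rw [this]
      exact FiniteField.pow_card_sub_one_eq_one x hx
    have hxq : x ^ q = x * x^(q-1) := by
      rw [← pow_succ']; congr 1; omega
    have e : b x + b x ^ q = x * (nhc s (x^(q-1)) + a + a^q * x^(q-1)) := by
      rw [hb, hadd, hsplit x hx, mul_pow, mul_pow, nhU_zpow hu, hxq, nhc,
        zpow_sub₀ (nhU_ne hu), zpow_one]
      ring
    rw [e, mul_eq_zero, or_iff_right hx, nhN, Finset.mem_filter, and_iff_right hu]
  have hM : ((X.filter (fun x => b x + b x ^ q = 0)).card : ℂ)
      = ((q:ℂ) - 1) * (nhN q s a).card := by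
    have h1 : (X.filter (fun x => b x + b x ^ q = 0)).card
        = ∑ u ∈ nhN q s a, (q - 1) := by
      rw [Finset.card_eq_sum_card_fiberwise (f := fun x => x^(q-1)) (t := nhN q s a)]
      · apply Finset.sum_congr rfl
        intro u hu
        refine Eq.trans ?_ (hfib u (Finset.mem_filter.1 hu).1)
        congr 1
        ext x
        simp only [Finset.mem_filter, Finset.mem_univ, true_and]
        constructor
        · exact fun h => h.2
        · rintro rfl
          have hx : x ∈ X := by
            rw [hXmem]; rintro rfl
            have := nhU_ne (Finset.mem_filter.1 hu).1
            rw [zero_pow (by omega)] at this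
            exact this rfl
          exact ⟨⟨hx, (hT x hx).2 hu⟩, rfl⟩
      · intro x hx
        rw [Finset.mem_coe, Finset.mem_filter] at hx
        exact (hT x hx.1).1 hx.2
    rw [h1, Finset.sum_const, smul_eq_mul]
    push_cast [Nat.cast_sub (show 1 ≤ q by omega)]
    ring
  have hkap : (Finset.univ.filter (fun z : K => z + z ^ q = 0)).card = q := by
    have : Finset.univ.filter (fun z : K => z + z ^ q = 0)
        = insert 0 (Finset.univ.filter (fun z : K => z ^ (q-1) = -1)) := by
      ext z
      simp only [Finset.mem_filter, Finset.mem_univ, true_and, Finset.mem_insert]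
      have hzq : z ^ q = z * z^(q-1) := by
        rw [← pow_succ']; congr 1; omega
      have : z + z^q = z * (z^(q-1) - (-1)) := by rw [hzq]; ring
      rw [this, mul_eq_zero, sub_eq_zero]
    rw [this, Finset.card_insert_of_notMem, hfib _ (nhU_neg hadd)]
    · omega
    · simp [zero_pow (show q - 1 ≠ 0 by omega)]
  -- double sum
  have hD1 : ∑ z : K, ∑ x ∈ X, Ψ ((z + z^q) * b x)
      = (q:ℂ)^2 * (((q:ℂ) - 1) * (nhN q s a).card) := by
    rw [Finset.sum_comm, ← hM]
    have : ∀ x ∈ X, ∑ z : K, Ψ ((z + z^q) * b x) = if b x + b x^q = 0 then (q:ℂ)^2 else 0 := by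
      intro x _
      rw [← hΨ]
      apply Finset.sum_congr rfl
      intro z _
      generalize b x = B
      rw [add_mul, mul_add, AddChar.map_add_eq_mul, AddChar.map_add_eq_mul]
      congr 1
      rw [← hfr, mul_pow, hqq]
    rw [Finset.sum_congr rfl this, ← Finset.sum_filter, Finset.sum_const, nsmul_eq_mul]
    ring
  have hD2 : ∑ z : K, ∑ x ∈ X, Ψ ((z + z^q) * b x)
      = q * ((q:ℂ)^2 - 1) + ((q:ℂ)^2 - q) * (W - 1) := by
    have : ∀ z : K, ∑ x ∈ X, Ψ ((z + z^q) * b x)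
        = (W - 1) + if z + z^q = 0 then ((q:ℂ)^2 - 1) - (W - 1) else 0 := by
      intro z
      split_ifs with h
      · rw [h]
        simp [hXc]
      · rw [add_zero, ← hW1]
        set y := z + z^q with hy
        have hyq : y^q = y := by rw [hy, hadd, hqq, add_comm]
        have hy1 : y^(q-1) = 1 := by
          have : y * y^(q-1) = y * 1 := by
            rw [← pow_succ', show q - 1 + 1 = q by omega, hyq, mul_one]
          exact mul_left_cancel₀ h this
        have hyd : y^d = y := by rw [hsplit y h, hy1, one_zpow, mul_one]
        refine Finset.sum_bij (fun x _ => y * x) ?_ ?_ ?_ ?_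
        · intro x hx
          rw [hXmem] at *
          exact mul_ne_zero h hx
        · intro a _ b _ hab
          exact mul_left_cancel₀ h hab
        · intro x hx
          rw [hXmem] at hx
          refine ⟨y⁻¹ * x, by rw [hXmem]; exact mul_ne_zero (inv_ne_zero h) hx, by field_simp⟩
        · intro x _
          rw [mul_zpow, hyd, hb]
          congr 1; ring
    rw [Finset.sum_congr rfl (fun z _ => this z), Finset.sum_add_distrib, ← Finset.sum_filter,
      Finset.sum_const, Finset.sum_const, hkap, Finset.card_univ, hK]
    simp only [nsmul_eq_mul]
    push_cast
    ring
  have hqne : (q:ℂ) ≠ 0 := by exact_mod_cast (show q ≠ 0 by omega)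
  have hqne1 : (q:ℂ) - 1 ≠ 0 := by
    rw [sub_ne_zero]; exact_mod_cast (show q ≠ 1 by omega)
  have := hD1.symm.trans hD2
  have h3 : ((q:ℂ) * (q-1)) * W = (q * (q-1)) * (q * (((nhN q s a).card : ℂ) - 1)) := by
    linear_combination -this
  exact mul_left_cancel₀ (mul_ne_zero hqne hqne1) h3
end

theorem nh_core {K : Type} [Field K] [Fintype K] {q p r : ℕ} (hp : p.Prime) [CharP K p]
    (hqr : q = p ^ r) (hr : r ≠ 0) (hK : Fintype.card K = q ^ 2) (Ψ : AddChar K ℂ)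
    (hΨ : ∀ c : K, ∑ z, Ψ (z * c) = if c = 0 then (q:ℂ)^2 else 0)
    (hfr : ∀ x, Ψ (x ^ q) = Ψ x) (s d : ℤ) (hd : d = 1 + s * (q - 1)) (hd0 : d ≠ 0)
    (hcop : Int.gcd d ((q:ℤ)^2 - 1) = 1) :
    {w : ℂ | ∃ a : K, a ≠ 0 ∧ ∑ x, Ψ (x ^ d + a * x) = w}.ncard ≠ 3 := by
  haveI := Fact.mk hp
  have hpq : p ∣ q := by rw [hqr]; exact dvd_pow_self p hr
  have hqpos : 0 < q := by rw [hqr]; exact pow_pos hp.pos r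
  have hq2 : 2 ≤ q := hp.two_le.trans (Nat.le_of_dvd hqpos hpq)
  have hadd : ∀ a b : K, (a+b)^q = a^q + b^q := by
    intro a b; rw [hqr]; exact add_pow_char_pow a b p r
  have hq0 : (q:K) = 0 := (CharP.cast_eq_zero_iff K p q).2 hpq
  obtain ⟨hU, hfib⟩ := nh_fib hq2 hK
  have hinj : ∀ u ∈ nhU K q, u ^ (2*s-1) = 1 → u = 1 := by
    intro u hu h
    have h0 := nhU_ne hu
    have hu1 : u ^ ((q:ℤ)+1) = 1 := by
      have := nhU_mem.1 hu
      exact_mod_cast this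
    have hud : u ^ d = 1 := by
      have : d = -(2*s-1) + s * ((q:ℤ)+1) := by rw [hd]; ring
      rw [this, zpow_add₀ h0, zpow_neg, h, mul_comm s, zpow_mul, hu1]; simp
    have huq : u ^ ((q:ℤ)^2-1) = 1 := by
      rw [show (q:ℤ)^2-1 = ((q:ℤ)+1)*(q-1) by ring, zpow_mul, hu1, one_zpow]
    have hb := Int.gcd_eq_gcd_ab d ((q:ℤ)^2-1)
    rw [hcop] at hb
    have : u ^ (1:ℤ) = 1 := by
      rw [show (1:ℤ) = ((1:ℕ):ℤ) by rfl, hb, zpow_add₀ h0, zpow_mul, zpow_mul, hud, huq]; simp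
    simpa using this
  let n : K → ℤ := fun a => ((nhN q s a).card : ℤ) - 1
  have hn : ∀ a, n a = ((nhN q s a).card : ℤ) - 1 := fun a => rfl
  have hW : ∀ a, ∑ x, Ψ (x ^ d + a * x) = q * ((n a : ℤ) : ℂ) := by
    intro a
    rw [nh_weil hq2 hK hadd Ψ hΨ hfr d hd hd0 a, hn]; push_cast; ring
  have hqc : (q:ℂ) ≠ 0 := by exact_mod_cast hqpos.ne'
  have h1 : ∑ a, n a = q := by
    have h : ∑ a, ∑ x, Ψ (x ^ d + a * x) = (q:ℂ)^2 := by
      rw [Finset.sum_comm]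
      have : ∀ x : K, ∑ a, Ψ (x ^ d + a * x) = if x = 0 then (q:ℂ)^2 else 0 := by
        intro x
        have : ∑ a, Ψ (x ^ d + a * x) = Ψ (x ^ d) * ∑ a, Ψ (a * x) := by
          rw [Finset.mul_sum]
          exact Finset.sum_congr rfl (fun a _ => AddChar.map_add_eq_mul _ _ _)
        rw [this, hΨ]
        split_ifs with h
        · rw [h, zero_zpow _ hd0]; simp
        · simp
      rw [Finset.sum_congr rfl (fun x _ => this x)]
      simp
    rw [Finset.sum_congr rfl (fun a _ => hW a), ← Finset.mul_sum, sq] at h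
    have := mul_left_cancel₀ hqc h
    exact_mod_cast this
  have h2 : ∑ a, (n a)^2 = (q:ℤ)^2 := by
    have h := nh_pairs (s := s) hadd hU
    have e : ∀ a : K, ((nhN q s a).card : ℤ) * (((nhN q s a).card : ℤ) - 1)
        = (n a)^2 + n a := by intro a; rw [hn]; ring
    rw [Finset.sum_congr rfl (fun a _ => e a), Finset.sum_add_distrib, h1] at h
    linarith
  have hn0 : n 0 = 0 := by rw [hn, nh_zero hq2 hadd hinj]; simp
  have hUm : (-1:K) ∈ nhU K q := nhU_neg hadd
  have hFmem : ∀ a : K, a ∈ nhL q s (-1:K) ↔ a ^ q = a := by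
    intro a
    simp only [nhL, Finset.mem_filter, Finset.mem_univ, true_and, nhc_neg]
    constructor
    · intro h; linear_combination -h
    · intro h; rw [h]; ring
  have hFc : (nhL q s (-1:K)).card = q := by
    have : nhL q s (-1:K) = insert 0 (Finset.univ.filter (fun z : K => z ^ (q-1) = 1)) := by
      ext z
      rw [hFmem]
      simp only [Finset.mem_filter, Finset.mem_univ, true_and, Finset.mem_insert]
      have hzq : z ^ q = z * z^(q-1) := by
        rw [← pow_succ']; congr 1; omega
      rw [hzq, ← sub_eq_zero, show z * z^(q-1) - z = z * (z^(q-1) - 1) by ring, mul_eq_zero,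
        sub_eq_zero]
    rw [this, Finset.card_insert_of_notMem, hfib _ nhU_one]
    · omega
    · simp [zero_pow (show q - 1 ≠ 0 by omega)]
  have hFm : ∀ a ∈ nhL q s (-1:K), (-1:K) ∈ nhN q s a := by
    intro a ha
    simp only [nhN, Finset.mem_filter, hUm, true_and]
    simpa [nhL] using ha
  have hFn : ∀ a ∈ nhL q s (-1:K), 0 ≤ n a := by
    intro a ha
    have := Finset.card_pos.2 ⟨_, hFm a ha⟩
    rw [hn]; omega
  intro h3
  have himg : {w : ℂ | ∃ a : K, a ≠ 0 ∧ ∑ x, Ψ (x ^ d + a * x) = w}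
      = (fun m : ℤ => (q:ℂ) * (m:ℂ)) '' (n '' {a | a ≠ 0}) := by
    ext w
    constructor
    · rintro ⟨a, ha, rfl⟩
      exact ⟨n a, ⟨a, ha, rfl⟩, (hW a).symm⟩
    · rintro ⟨_, ⟨a, ha, rfl⟩, rfl⟩
      exact ⟨a, ha, hW a⟩
  rw [himg, Set.ncard_image_of_injective _ (by
    intro x y hxy
    have := mul_left_cancel₀ hqc hxy
    exact_mod_cast this)] at h3
  obtain ⟨hnq, m, hm2, hmq, hall⟩ := nh_end n q hq2 hK h1 h2 hn0 (nhL q s (-1:K)) hFc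
    (by rw [hFmem, zero_pow (by omega)]) hFn (nh_line hadd hU hUm)
    (fun a => by rw [hn]; omega) h3
  -- if -1 lies on all lines we are done
  by_cases hp2 : p = 2
  · have h2K : (2:K) = 0 := by
      have := CharP.cast_eq_zero K p
      rw [hp2] at this
      exact_mod_cast this
    have hmeven : (2:ℤ) ∣ m := by
      have h' : m.natAbs ∣ p ^ r := by
        rw [← hqr]; exact Int.natAbs_dvd_natAbs.2 hmq
      obtain ⟨k, _, hk⟩ := (Nat.dvd_prime_pow hp).1 h'
      have hk0 : k ≠ 0 := by rintro rfl; simp at hk; omega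
      have : 2 ∣ m.natAbs := by rw [hk, hp2]; exact dvd_pow_self 2 hk0
      omega
    have hN : ∀ a : K, (nhN q s a).card = 0 ∨ Odd (nhN q s a).card := by
      intro a
      have h := hall a
      rw [hn] at h
      rcases h with h | h | h
      · left; omega
      · right; rw [Nat.odd_iff]; omega
      · right; rw [Nat.odd_iff]; omega
    have hone : ∀ u ∈ nhU K q, nhc s u = 1 + u := by
      intro u hu
      have h0 := nhU_ne hu
      rcases nh_even hadd h2K hq0 hq2 hU hinj hN with h | h
      · rw [nhc, sub_eq_add_neg, zpow_add₀ h0, zpow_neg, h u hu]; simp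
      · have e1 : u ^ s = u := by
          have := h u hu
          rw [zpow_sub_one₀ h0, mul_inv_eq_one₀ h0] at this
          exact this
        have e2 : u ^ (1 - s) = 1 := by
          rw [show 1 - s = -(s-1) by ring, zpow_neg, h u hu, inv_one]
        rw [nhc, e1, e2, add_comm]
    apply hnq 1
    have : nhN q s (1:K) = nhU K q := by
      rw [nhN, Finset.filter_eq_self]
      intro u hu
      rw [hone u hu, one_pow]
      linear_combination (1 + u) * h2K
    rw [hn, this, hU]; push_cast; ring
  · have h2K : (2:K) ≠ 0 := by
      intro h
      have : ((2:ℕ):K) = 0 := by exact_mod_cast h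
      rw [CharP.cast_eq_zero_iff K p] at this
      exact hp2 ((Nat.prime_dvd_prime_iff_eq hp Nat.prime_two).1 this)
    have hqodd : Odd q := by
      rw [hqr]; exact (hp.odd_of_ne_two hp2).pow
    have hmodd : Odd m := by
      have : Odd (q:ℤ) := by exact_mod_cast hqodd
      obtain ⟨t, ht⟩ := hmq
      rw [ht] at this
      exact (Int.odd_mul.1 this).1
    have hz : ∀ a ∈ nhL q s (-1:K), a ≠ -1 → n a = 0 := by
      intro a ha ha1
      have he := nh_odd (s := s) h2K hadd ((hFmem a).1 ha) ha1
      have hc := Finset.card_pos.2 ⟨_, hFm a ha⟩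
      have h0 := hFn a ha
      rcases hall a with h | h | h
      · omega
      · exact h
      · exfalso
        rw [hn] at h
        rw [Nat.even_iff] at he
        rw [Int.odd_iff] at hmodd
        omega
    have hm1 : (-1:K) ∈ nhL q s (-1:K) := by
      rw [hFmem]
      have := nhU_pow hUm
      rw [this]; norm_num
    have hs := nh_line (s := s) hadd hU hUm
    rw [Finset.sum_eq_single_of_mem _ hm1 (fun a ha h => hz a ha h)] at hs
    exact hnq (-1) hs


theorem stmt7 (p : ℕ) [Fact p.Prime] (K : Type) [Field K] [Fintype K] [CharP K p]
    [Algebra (ZMod p) K]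
    (q : ℕ) (hq : Fintype.card K = q ^ 2)
    (d : ℤ) (hd : Int.gcd d ((Fintype.card K : ℤ) - 1) = 1)
    (hniho : IsDegenerate p q d) :
    (weilValues p K d).ncard ≠ 3 := by
  have hp : p.Prime := Fact.out
  -- q is a power of p
  obtain ⟨N, hNp, hN⟩ := FiniteField.card K p
  have hqd : q ∣ p ^ (N:ℕ) := by
    rw [← hN, hq]; exact dvd_pow_self q two_ne_zero
  obtain ⟨r, _, hqr⟩ := (Nat.dvd_prime_pow hp).1 hqd
  have hr : r ≠ 0 := by
    rintro rfl
    have h1 := Fintype.one_lt_card (α := K)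
    rw [hq, hqr] at h1
    simp at h1
  have hr1 : 1 ≤ r := Nat.one_le_iff_ne_zero.2 hr
  let Ψ : AddChar K ℂ := (ZMod.stdAddChar (N := p)).compAddMonoidHom
    (Algebra.trace (ZMod p) K).toAddMonoidHom
  have hΨc : ∀ x, canonicalAddChar p K x = Ψ x := by
    intro x
    simp only [Ψ, AddChar.compAddMonoidHom_apply, canonicalAddChar, ZMod.stdAddChar_apply,
      ZMod.toCircle_apply]
    rfl
  have hΨ1 : Ψ ≠ 1 := by
    intro h
    obtain ⟨x, hx⟩ := Algebra.trace_surjective (ZMod p) K 1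
    have h' : Ψ x = 1 := by rw [h]; rfl
    have h2 : ZMod.stdAddChar (1 : ZMod p) = (1:ℂ) := by
      rw [← h', ← hx]; rfl
    rw [← (ZMod.stdAddChar (N := p)).map_zero_eq_one, ZMod.injective_stdAddChar.eq_iff] at h2
    exact one_ne_zero h2
  have hΨ : ∀ c : K, ∑ z, Ψ (z * c) = if c = 0 then (q:ℂ)^2 else 0 := by
    intro c
    rw [AddChar.sum_mulShift c (AddChar.IsPrimitive.of_ne_one hΨ1), hq]
    push_cast
    rfl
  have hfr1 : ∀ x, Ψ (x ^ p) = Ψ x := by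
    intro x
    have h := Algebra.trace_eq_of_algEquiv
      (FiniteField.frobeniusAlgEquivOfAlgebraic (ZMod p) K) x
    rw [FiniteField.coe_frobeniusAlgEquivOfAlgebraic, ZMod.card] at h
    simp only [Ψ, AddChar.compAddMonoidHom_apply]
    exact congrArg _ h
  have hfr : ∀ k x, Ψ (x ^ (p ^ k)) = Ψ x := by
    intro k
    induction k with
    | zero => intro x; simp
    | succ k ih => intro x; rw [pow_succ, pow_mul, hfr1, ih]
  obtain ⟨j, hj⟩ := hniho
  have hcK : ((Fintype.card K : ℤ) - 1) = (q:ℤ)^2 - 1 := by rw [hq]; push_cast; ring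
  rw [hcK] at hd
  have hqge : 2 ≤ q := by
    rw [hqr]; exact hp.two_le.trans (Nat.le_self_pow hr p)
  -- replace d by d * p^k
  have hk : d * (p:ℤ) ^ (j * (r-1)) ≡ 1 [ZMOD (q:ℤ) - 1] := by
    have h1 := hj.mul_right ((p:ℤ) ^ (j * (r-1)))
    have h2 : (p:ℤ)^j * (p:ℤ)^(j*(r-1)) = (q:ℤ)^j := by
      rw [hqr]; push_cast
      rw [← pow_add, ← pow_mul]
      congr 1
      obtain ⟨t, rfl⟩ := Nat.exists_eq_add_of_le hr1
      simp only [Nat.add_sub_cancel_left]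
      ring
    rw [h2] at h1
    have h3 : (q:ℤ) ≡ 1 [ZMOD (q:ℤ) - 1] :=
      (Int.modEq_iff_dvd.2 ⟨-1, by ring⟩)
    have h4 := h3.pow j
    rw [one_pow] at h4
    exact h1.trans h4
  obtain ⟨s, hs⟩ := Int.modEq_iff_dvd.1 hk.symm
  set D : ℤ := d * (p:ℤ) ^ (j * (r-1)) with hD
  have hDcop : Int.gcd D ((q:ℤ)^2 - 1) = 1 := by
    rw [← Int.isCoprime_iff_gcd_eq_one] at hd ⊢
    rw [hD]
    apply IsCoprime.mul_left hd
    apply IsCoprime.pow_left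
    have hpq : (p:ℤ) ∣ (q:ℤ) := by
      rw [hqr]; push_cast; exact dvd_pow_self _ hr
    obtain ⟨t, ht⟩ := hpq
    exact ⟨t * q, -1, by rw [ht]; ring⟩
  have hq4 : (4:ℤ) ≤ (q:ℤ)^2 := by
    have : (2:ℤ) ≤ q := by exact_mod_cast hqge
    nlinarith
  have hD0 : D ≠ 0 := by
    intro h
    rw [h, Int.gcd_zero_left] at hDcop
    omega
  have hfin := nh_core hp hqr hr hq Ψ hΨ (fun x => by rw [hqr]; exact hfr r x) s D
    (by linear_combination hs) hD0 hDcop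
  have hset : weilValues p K d = {w : ℂ | ∃ a : K, a ≠ 0 ∧ ∑ x, Ψ (x ^ D + a * x) = w} := by
    have : ∀ a, weilSum p K d a = ∑ x, Ψ (x ^ D + a * x) := by
      intro a
      rw [weilSum]
      apply Finset.sum_congr rfl
      intro x _
      rw [hΨc, AddChar.map_add_eq_mul, AddChar.map_add_eq_mul, hD, zpow_mul]
      congr 1
      rw [← hfr (j * (r-1)) (x ^ d), ← zpow_natCast]
      push_cast
      rfl
    simp only [weilValues, this]
  rw [hset]
  exact hfin
end

section
/- Let K be a finite field and let d be an integer with gcd(d, |K| − 1) = 1. Let R be the set of roots of the polynomial (x+1)^d − x^d − 1 in K. Then ∑_{a ∈ K^×} W_{K,d}(a)^3 = |K|^2 · |R|. -/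
open scoped BigOperators Classical

theorem canon_exists (p : ℕ) [Fact p.Prime] (K : Type) [Field K] [Fintype K]
    [Algebra (ZMod p) K] :
    ∃ ψ : AddChar K ℂ, ψ.IsPrimitive ∧ ∀ x, canonicalAddChar p K x = ψ x := by
  refine ⟨(ZMod.stdAddChar (N := p)).compAddMonoidHom
    (Algebra.trace (ZMod p) K).toAddMonoidHom, ?_, ?_⟩
  · apply AddChar.IsPrimitive.of_ne_one
    intro h
    have hs := Algebra.trace_surjective (ZMod p) K
    obtain ⟨x, hx⟩ := hs 1
    have h1 := DFunLike.congr_fun h x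
    have h2 : ZMod.stdAddChar (N := p) (1 : ZMod p) = ZMod.stdAddChar (N := p) (0 : ZMod p) := by
      simpa [hx] using h1
    exact one_ne_zero (ZMod.injective_stdAddChar h2)
  · intro x
    simp only [canonicalAddChar, AddChar.compAddMonoidHom_apply, ZMod.stdAddChar_apply]
    rw [ZMod.toCircle_apply]
    rfl

theorem zpow_inj_aux (K : Type) [Field K] [Fintype K] (d : ℤ) (hd0 : d ≠ 0)
    (hd : Int.gcd d ((Fintype.card K : ℤ) - 1) = 1) :
    Function.Bijective (fun x : K => x ^ d) := by
  rw [← Finite.injective_iff_bijective]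
  have key : ∀ x : K, x ≠ 0 → (x ^ d) ^ (Int.gcdA d ((Fintype.card K : ℤ) - 1)) = x := by
    intro x hx
    have hb := Int.gcd_eq_gcd_ab d ((Fintype.card K : ℤ) - 1)
    rw [hd] at hb
    have hq : x ^ ((Fintype.card K : ℤ) - 1) = 1 := by
      have := FiniteField.pow_card_sub_one_eq_one x hx
      rw [zpow_sub₀ hx, zpow_natCast, FiniteField.pow_card, zpow_one, div_self hx]
    have : x ^ (1 : ℤ) = (x ^ d) ^ (Int.gcdA d ((Fintype.card K : ℤ) - 1)) := by
      conv_lhs => rw [show (1 : ℤ) = ((1 : ℕ) : ℤ) from rfl, hb, zpow_add₀ hx, zpow_mul, zpow_mul, hq, one_zpow, mul_one]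
    rw [← this, zpow_one]
  intro x y hxy
  simp only at hxy
  by_cases hx : x = 0
  · subst hx
    rw [zero_zpow d hd0] at hxy
    by_contra hy
    exact zpow_ne_zero d (Ne.symm hy) hxy.symm
  · by_cases hy : y = 0
    · subst hy
      rw [zero_zpow d hd0] at hxy
      exact absurd hxy (zpow_ne_zero d hx)
    · rw [← key x hx, hxy, key y hy]

theorem neg_zpow_aux (K : Type) [Field K] [Fintype K] (d : ℤ)
    (hd : Int.gcd d ((Fintype.card K : ℤ) - 1) = 1) (x : K) : (-x) ^ d = - x ^ d := by
  by_cases h2 : ringChar K = 2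
  · haveI : CharP K 2 := by rw [← h2]; infer_instance
    rw [CharTwo.neg_eq, CharTwo.neg_eq]
  · have hq := FiniteField.odd_card_of_char_ne_two h2
    have : Odd d := by
      by_contra hne
      rw [Int.not_odd_iff_even] at hne
      have h := Int.dvd_coe_gcd hne.two_dvd
        (show (2 : ℤ) ∣ (Fintype.card K : ℤ) - 1 by omega)
      rw [hd] at h
      norm_num at h
    exact this.neg_zpow x

theorem stmt10 (p : ℕ) [Fact p.Prime] (K : Type) [Field K] [Fintype K] [DecidableEq K]
    [CharP K p] [Algebra (ZMod p) K]
    (d : ℤ) (hd : Int.gcd d ((Fintype.card K : ℤ) - 1) = 1) :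
    ∑ a : Kˣ, (weilSum p K d (a : K)) ^ 3 =
      (Fintype.card K : ℂ) ^ 2 * (({x : K | (x + 1) ^ d - x ^ d - 1 = 0} : Set K).ncard : ℂ) := by
  obtain ⟨ψ, hψ, hc⟩ := canon_exists p K
  have hsum : ∀ b : K, ∑ x : K, ψ (x * b) = if b = 0 then (Fintype.card K : ℂ) else 0 := by
    intro b
    rw [AddChar.sum_mulShift b hψ]
    split_ifs <;> simp
  have hW : ∀ a, weilSum p K d a = ∑ x : K, ψ (x ^ d) * ψ (x * a) := by
    intro a
    simp only [weilSum, hc, AddChar.map_add_eq_mul, mul_comm a]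
  by_cases hd0 : d = 0
  · subst hd0
    have h0 : ∀ a : Kˣ, weilSum p K 0 (a : K) = 0 := by
      intro a
      rw [hW]
      simp only [zpow_zero]
      rw [← Finset.mul_sum, hsum, if_neg a.ne_zero, mul_zero]
    simp [h0]
  have hbij := zpow_inj_aux K d hd0 hd
  have hperm : ∀ b : K, ∑ y : K, ψ (y ^ d * b) = if b = 0 then (Fintype.card K : ℂ) else 0 := by
    intro b
    rw [← hsum]
    exact hbij.sum_comp (fun u => ψ (u * b))
  have hW0 : weilSum p K d 0 = 0 := by
    rw [hW]
    have := hperm 1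
    simpa using this
  have hall : ∑ a : Kˣ, (weilSum p K d (a : K)) ^ 3 = ∑ a : K, (weilSum p K d a) ^ 3 := by
    have e1 : ∑ a : K, (weilSum p K d a) ^ 3
        = ∑ a ∈ Finset.univ.filter (fun a : K => a ≠ 0), (weilSum p K d a) ^ 3 := by
      rw [Finset.sum_filter]
      refine Finset.sum_congr rfl fun a _ => ?_
      by_cases h : a = 0
      · simp [h, hW0]
      · simp [h]
    rw [e1]
    refine Finset.sum_bij (fun a _ => (a : K)) ?_ ?_ ?_ ?_
    · intro a _; simp
    · intro a _ b _ h; exact Units.ext h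
    · intro b hb
      exact ⟨Units.mk0 b (by simpa using hb), Finset.mem_univ _, rfl⟩
    · intro a _; rfl
  rw [hall]
  have hcube : ∀ a, (weilSum p K d a) ^ 3
      = ∑ x : K, ∑ y : K, ∑ z : K, ψ (x ^ d + y ^ d + z ^ d) * ψ (a * (x + y + z)) := by
    intro a
    rw [hW, pow_three, Finset.sum_mul_sum, Finset.sum_mul_sum]
    refine Finset.sum_congr rfl fun x _ => ?_
    simp_rw [Finset.mul_sum]
    refine Finset.sum_congr rfl fun y _ => ?_
    refine Finset.sum_congr rfl fun z _ => ?_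
    rw [mul_comm a (x + y + z)]
    simp only [add_mul, AddChar.map_add_eq_mul]
    ring
  have h1 : ∑ a : K, (weilSum p K d a) ^ 3
      = ∑ x : K, ∑ y : K, (Fintype.card K : ℂ) * ψ (x ^ d + y ^ d - (x + y) ^ d) := by
    simp_rw [hcube]
    rw [Finset.sum_comm]
    refine Finset.sum_congr rfl fun x _ => ?_
    rw [Finset.sum_comm]
    refine Finset.sum_congr rfl fun y _ => ?_
    rw [Finset.sum_comm]
    simp_rw [← Finset.mul_sum, hsum]
    rw [Finset.sum_eq_single (-(x + y))]
    · rw [if_pos (by ring), neg_zpow_aux K d hd, sub_eq_add_neg, mul_comm]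
    · intro z _ hz
      rw [if_neg, mul_zero]
      intro h
      exact hz (by linear_combination h)
    · simp
  have h2 : ∀ y : K, ∑ x : K, ψ (x ^ d + y ^ d - (x + y) ^ d)
      = ∑ t : K, ψ (y ^ d * (t ^ d + 1 - (t + 1) ^ d)) := by
    intro y
    by_cases hy : y = 0
    · subst hy
      simp [zero_zpow d hd0]
    · rw [← (mulLeft_bijective₀ y hy).sum_comp (fun x => ψ (x ^ d + y ^ d - (x + y) ^ d))]
      refine Finset.sum_congr rfl fun t _ => ?_
      congr 1
      rw [show y * t + y = y * (t + 1) by ring, mul_zpow, mul_zpow]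
      ring
  rw [h1, Finset.sum_comm]
  simp_rw [← Finset.mul_sum, h2]
  rw [Finset.sum_comm]
  simp_rw [hperm]
  rw [← Finset.sum_filter, Finset.sum_const, nsmul_eq_mul, Set.ncard_eq_toFinset_card',
    Set.toFinset_setOf]
  have : (Finset.univ.filter fun t : K => t ^ d + 1 - (t + 1) ^ d = 0)
      = Finset.univ.filter fun t : K => (t + 1) ^ d - t ^ d - 1 = 0 := by
    ext t
    simp only [Finset.mem_filter, Finset.mem_univ, true_and]
    constructor <;> intro h <;> linear_combination -h
  rw [this, sq, mul_comm (Finset.card _ : ℂ), mul_assoc]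
end

section
/- Let K be a finite field of characteristic p and let d be an integer with gcd(d, |K| − 1) = 1 that is nondegenerate over K. Then for every a ∈ K^×, the complex absolute value satisfies |W_{K,d}(a)| < |K|. -/
open scoped BigOperators Classical

theorem aux_char_norm (p : ℕ) [Fact p.Prime] (K : Type) [Field K] [Fintype K]
    [Algebra (ZMod p) K] (x : K) : ‖canonicalAddChar p K x‖ = 1 := by
  unfold canonicalAddChar
  have : (2 * Real.pi * Complex.I * ((Algebra.trace (ZMod p) K x).val : ℂ) / (p : ℂ))
    = ((2 * Real.pi * ((Algebra.trace (ZMod p) K x).val : ℝ) / (p : ℝ) : ℝ) : ℂ) * Complex.I := by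
    push_cast; ring
  rw [this, Complex.norm_exp_ofReal_mul_I]

theorem aux_char_zero (p : ℕ) [Fact p.Prime] (K : Type) [Field K] [Fintype K]
    [Algebra (ZMod p) K] : canonicalAddChar p K 0 = 1 := by
  simp [canonicalAddChar]

theorem aux_trace_zero (p : ℕ) [Fact p.Prime] (K : Type) [Field K] [Fintype K]
    [Algebra (ZMod p) K] (x : K) (h : canonicalAddChar p K x = 1) :
    Algebra.trace (ZMod p) K x = 0 := by
  unfold canonicalAddChar at h
  rw [Complex.exp_eq_one_iff] at h
  obtain ⟨n, hn⟩ := h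
  have hp : (p : ℂ) ≠ 0 := by exact_mod_cast (Fact.out : p.Prime).ne_zero
  have h2 := Complex.two_pi_I_ne_zero
  have h3 : ((Algebra.trace (ZMod p) K x).val : ℂ) = n * p := by
    rw [div_eq_iff hp] at hn
    apply mul_left_cancel₀ h2
    rw [hn]; ring
  have h4 : ((Algebra.trace (ZMod p) K x).val : ℤ) = n * p := by exact_mod_cast h3
  have h5 : p ∣ (Algebra.trace (ZMod p) K x).val := by
    have : (p : ℤ) ∣ ((Algebra.trace (ZMod p) K x).val : ℤ) := ⟨n, by rw [h4]; ring⟩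
    exact_mod_cast this
  have h6 := Nat.eq_zero_of_dvd_of_lt h5 (ZMod.val_lt _)
  exact (ZMod.val_eq_zero _).1 h6

theorem aux_norm_lt {K : Type} [Fintype K] (f : K → ℂ) (hf : ∀ x, ‖f x‖ = 1) (y z : K)
    (hyz : f y ≠ f z) : ‖∑ x, f x‖ < Fintype.card K := by
  have hne : y ≠ z := fun h => hyz (by rw [h])
  have hz : z ∈ (Finset.univ : Finset K).erase y := by simp [hne.symm]
  rw [← Finset.add_sum_erase _ _ (Finset.mem_univ y), ← Finset.add_sum_erase _ _ hz, ← add_assoc]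
  have h1 : ‖f y + f z‖ < ‖f y‖ + ‖f z‖ := by
    apply norm_add_lt_of_not_sameRay
    rw [sameRay_iff_of_norm_eq (by rw [hf, hf])]
    exact hyz
  have h2 : ‖∑ x ∈ (Finset.univ.erase y).erase z, f x‖ ≤ (((Finset.univ.erase y).erase z).card : ℝ) := by
    refine (norm_sum_le _ _).trans ?_
    simp [hf]
  have h3 : (((Finset.univ.erase y).erase z).card : ℝ) + 2 = Fintype.card K := by
    have a1 := Finset.card_erase_add_one hz
    have a2 := Finset.card_erase_add_one (Finset.mem_univ y)
    rw [Finset.card_univ] at a2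
    have : ((Finset.univ.erase y).erase z).card + 2 = Fintype.card K := by omega
    exact_mod_cast this
  rw [hf, hf] at h1
  have := norm_add_le (f y + f z) (∑ x ∈ (Finset.univ.erase y).erase z, f x)
  linarith

theorem aux_main (p : ℕ) [Fact p.Prime] (K : Type) [Field K] [Fintype K] [CharP K p]
    [Algebra (ZMod p) K] (e : ℕ)
    (hnd : ∀ j : ℕ, ¬ ((Fintype.card K - 1) ∣ (e * p ^ j + (Fintype.card K - 2))))
    (a : K)
    (h : ∀ x : Kˣ, Algebra.trace (ZMod p) K ((x : K) ^ e + a * x) = 0) : a = 0 := by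
  set q := Fintype.card K with hq
  have hq2 : 2 ≤ q := Fintype.one_lt_card
  set n := Module.finrank (ZMod p) K with hn
  have hqn : q = p ^ n := by
    rw [hq, Module.card_eq_pow_finrank (K := ZMod p), ZMod.card]
  have hn0 : 0 < n := Module.finrank_pos
  have hp1 : 1 < p := (Fact.out : p.Prime).one_lt
  have key : ∑ x : Kˣ, (x : K) ^ (q - 2) *
      algebraMap (ZMod p) K (Algebra.trace (ZMod p) K ((x : K) ^ e + a * x)) = 0 := by
    simp [h]
  have e1 : ∀ x : Kˣ, (x : K) ^ (q - 2) *
      algebraMap (ZMod p) K (Algebra.trace (ZMod p) K ((x : K) ^ e + a * x)) =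
      ∑ i ∈ Finset.range n, ((x : K) ^ (e * p ^ i + (q - 2)) +
        a ^ p ^ i * (x : K) ^ (p ^ i + (q - 2))) := by
    intro x
    rw [FiniteField.algebraMap_trace_eq_sum_pow, Finset.mul_sum, Nat.card_zmod]
    refine Finset.sum_congr rfl fun i _ => ?_
    rw [add_pow_char_pow]
    ring
  simp only [e1] at key
  rw [Finset.sum_comm] at key
  simp only [Finset.sum_add_distrib, ← Finset.mul_sum] at key
  simp only [← hq, FiniteField.sum_pow_units, hnd, if_false] at key
  rw [Finset.sum_eq_zero (fun _ _ => rfl), zero_add, Finset.sum_eq_single 0] at key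
  · have : q - 1 ∣ p ^ 0 + (q - 2) := by
      have : p ^ 0 + (q - 2) = q - 1 := by rw [pow_zero]; omega
      rw [this]
    rw [if_pos this] at key
    simpa using key
  · intro i hi hi0
    rw [if_neg, mul_zero]
    intro hdvd
    have hi := Finset.mem_range.1 hi
    have l1 : p ^ i < p ^ n := Nat.pow_lt_pow_right hp1 hi
    have l2 : 1 < p ^ i := Nat.one_lt_pow hi0 hp1
    have : p ^ i + (q - 2) = (p ^ i - 1) + (q - 1) := by omega
    rw [this, Nat.dvd_add_left dvd_rfl] at hdvd
    have := Nat.le_of_dvd (by omega) hdvd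
    omega
  · intro h0
    simp at h0
    omega

theorem stmt11 (p : ℕ) [Fact p.Prime] (K : Type) [Field K] [Fintype K] [CharP K p]
    [Algebra (ZMod p) K]
    (d : ℤ) (hd : Int.gcd d ((Fintype.card K : ℤ) - 1) = 1)
    (hnd : ¬ IsDegenerate p (Fintype.card K) d) :
    ∀ a : K, a ≠ 0 → ‖weilSum p K d a‖ < Fintype.card K := by
  intro a ha
  have hq2 : 2 ≤ Fintype.card K := Fintype.one_lt_card
  have hd0 : d ≠ 0 := by
    rintro rfl
    rw [Int.gcd_zero_left] at hd
    apply hnd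
    refine ⟨0, ?_⟩
    have : (Fintype.card K : ℤ) - 1 = 1 := by omega
    rw [this]
    exact Int.modEq_one
  by_contra hcon
  have hall : ∀ x : K, canonicalAddChar p K (x ^ d + a * x) = 1 := by
    intro x
    by_contra hx
    apply hcon
    refine aux_norm_lt (fun x : K => canonicalAddChar p K (x ^ d + a * x))
      (fun x => aux_char_norm p K _) x 0 ?_
    simpa [zero_zpow _ hd0, aux_char_zero] using hx
  have hpos : (0 : ℤ) < (Fintype.card K : ℤ) - 1 := by omega
  obtain ⟨e, he⟩ := Int.eq_ofNat_of_zero_le (Int.emod_nonneg d hpos.ne')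
  have hmod : (e : ℤ) ≡ d [ZMOD (Fintype.card K : ℤ) - 1] := by
    rw [← he]; exact Int.mod_modEq _ _
  apply ha
  refine aux_main p K e ?_ a ?_
  · intro j hj
    apply hnd
    set n := Module.finrank (ZMod p) K with hn
    have hqn : Fintype.card K = p ^ n := by
      rw [Module.card_eq_pow_finrank (K := ZMod p), ZMod.card]
    have hn0 : 0 < n := Module.finrank_pos
    have hpn : (p : ℤ) ^ n ≡ 1 [ZMOD (Fintype.card K : ℤ) - 1] := by
      rw [hqn]; push_cast
      exact (Int.modEq_sub _ _)
    have hep : (e : ℤ) * p ^ j ≡ 1 [ZMOD (Fintype.card K : ℤ) - 1] := by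
      have h1 : (Fintype.card K : ℤ) - 1 ∣ (e : ℤ) * p ^ j + ((Fintype.card K : ℤ) - 2) := by
        have := Int.natCast_dvd_natCast.2 hj
        push_cast [Nat.cast_sub hq2, Nat.cast_sub (show 1 ≤ Fintype.card K by omega)] at this
        exact this
      apply Int.ModEq.symm
      rw [Int.modEq_iff_dvd]
      have := dvd_sub h1 (dvd_refl ((Fintype.card K : ℤ) - 1))
      have h2 : (e : ℤ) * p ^ j - 1 =
          (e : ℤ) * p ^ j + ((Fintype.card K : ℤ) - 2) - ((Fintype.card K : ℤ) - 1) := by ring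
      rw [h2]
      exact this
    refine ⟨n * j - j, ?_⟩
    have hle : j ≤ n * j := Nat.le_mul_of_pos_left j hn0
    have h3 : (p : ℤ) ^ (n * j) ≡ 1 [ZMOD (Fintype.card K : ℤ) - 1] := by
      rw [pow_mul]; simpa using hpn.pow j
    have h4 := hep.mul_right ((p : ℤ) ^ (n * j - j))
    rw [mul_assoc, ← pow_add, Nat.add_sub_cancel' hle, one_mul] at h4
    have h5 := h3.mul_left (e : ℤ)
    rw [mul_one] at h5
    exact (hmod.symm.trans h5.symm).trans h4
  · intro x
    have hx : (x : K) ^ d = (x : K) ^ e := by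
      rw [← zpow_natCast, ← Units.val_zpow_eq_zpow_val, ← Units.val_zpow_eq_zpow_val]
      congr 1
      rw [zpow_eq_zpow_iff_modEq]
      refine hmod.symm.of_dvd ?_
      have h1 : orderOf x ∣ Fintype.card K - 1 := by
        rw [← Fintype.card_units]; exact orderOf_dvd_card
      have := Int.natCast_dvd_natCast.2 h1
      rwa [Nat.cast_sub (by omega), Nat.cast_one] at this
    rw [← hx]
    exact aux_trace_zero p K _ (hall x)
end

section
/- Let K be a finite field of characteristic p and let d be an integer with gcd(d, |K| − 1) = 1 that is nondegenerate over K. Then there exist a, b ∈ K^× such that W_{K,d}(a) is a positive real number and W_{K,d}(b) is a negative real number. -/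
open scoped BigOperators Classical

theorem zpow_card_aux (K : Type) [Field K] [Fintype K] (x : K) (hx : x ≠ 0) (d e : ℤ)
    (h : d ≡ e [ZMOD (Fintype.card K : ℤ) - 1]) : x ^ d = x ^ e := by
  obtain ⟨k, hk⟩ := h.dvd
  have he : e = d + ((Fintype.card K - 1 : ℕ) : ℤ) * k := by
    have : 1 ≤ Fintype.card K := Fintype.card_pos
    push_cast [this]
    linarith
  rw [he, zpow_add₀ hx, zpow_mul, zpow_natCast, FiniteField.pow_card_sub_one_eq_one x hx]
  simp

theorem degenerate_aux (p : ℕ) [Fact p.Prime] (K : Type) [Field K] [Fintype K]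
    [Algebra (ZMod p) K] (d : ℤ) (a : K) (ha : a ≠ 0)
    (h : ∀ x : K, Algebra.trace (ZMod p) K (x ^ d + a * x) = 0) :
    IsDegenerate p (Fintype.card K) d := by
  by_contra hnd
  have hq1 : 1 < Fintype.card K := Fintype.one_lt_card
  set q := Fintype.card K with hq
  set n := Module.finrank (ZMod p) K with hn
  have hqn : q = p ^ n := by
    have := Module.card_eq_pow_finrank (K := ZMod p) (V := K)
    rwa [ZMod.card] at this
  have hn0 : 0 < n := by
    rcases Nat.eq_zero_or_pos n with h0 | h0
    · rw [h0] at hqn; simp at hqn; omega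
    · exact h0
  have hp1 : 1 < p := (Fact.out : p.Prime).one_lt
  obtain ⟨D, hD⟩ : ∃ D : ℕ, (d : ℤ) ≡ (D : ℤ) [ZMOD (q : ℤ) - 1] := by
    refine ⟨(d % ((q : ℤ) - 1)).toNat, ?_⟩
    rw [Int.toNat_of_nonneg (Int.emod_nonneg _ (by omega))]
    exact (Int.mod_modEq _ _).symm
  have key : ∀ x : Kˣ, (∑ i ∈ Finset.range n, (x : K) ^ (D * p ^ i + (q - 2))) +
      ∑ i ∈ Finset.range n, a ^ (p ^ i) * (x : K) ^ (p ^ i + (q - 2)) = 0 := by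
    intro x
    have h1 := h x
    rw [map_add] at h1
    have h2 := congrArg (algebraMap (ZMod p) K) h1
    rw [map_add, FiniteField.algebraMap_trace_eq_sum_pow,
      FiniteField.algebraMap_trace_eq_sum_pow, map_zero, Nat.card_zmod, 
      zpow_card_aux K x x.ne_zero d D hD, zpow_natCast] at h2
    have h3 := congrArg (fun t => t * (x : K) ^ (q - 2)) h2
    simp only [add_mul, Finset.sum_mul, zero_mul] at h3
    rw [← h3]
    congr 1 <;> refine Finset.sum_congr rfl fun i _ => ?_
    · rw [pow_add, pow_mul]
    · rw [pow_add, mul_pow, mul_assoc]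
  have hsum := Finset.sum_congr (rfl : (Finset.univ : Finset Kˣ) = Finset.univ) fun x _ => key x
  rw [Finset.sum_add_distrib, Finset.sum_comm, Finset.sum_comm (s := Finset.univ)] at hsum
  simp only [← Finset.mul_sum, FiniteField.sum_pow_units, ← hq] at hsum
  have hA : ∀ i ∈ Finset.range n, (if q - 1 ∣ D * p ^ i + (q - 2) then (-1 : K) else 0) = 0 := by
    intro i hi
    rw [if_neg]
    intro hdvd
    apply hnd
    have hi : i < n := Finset.mem_range.1 hi
    refine ⟨n - i, ?_⟩
    have e1 : (D : ℤ) * (p : ℤ) ^ i ≡ 1 [ZMOD (q : ℤ) - 1] := by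
      obtain ⟨k, hk⟩ := hdvd
      apply Int.ModEq.symm
      rw [Int.modEq_iff_dvd]
      refine ⟨k - 1, ?_⟩
      have := congrArg (Nat.cast : ℕ → ℤ) hk
      push_cast [show 1 ≤ q by omega, show 2 ≤ q by omega] at this
      linarith
    have e2 : (p : ℤ) ^ n ≡ 1 [ZMOD (q : ℤ) - 1] := by
      apply Int.ModEq.symm
      rw [Int.modEq_iff_dvd, hqn]
      push_cast
      exact dvd_rfl
    have e3 : (p : ℤ) ^ n = p ^ i * p ^ (n - i) := by
      rw [← pow_add]; congr 1; omega
    calc d ≡ D [ZMOD (q : ℤ) - 1] := hD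
      _ = D * 1 := by ring
      _ ≡ D * p ^ n [ZMOD (q : ℤ) - 1] := (e2.mul_left _).symm
      _ = D * p ^ i * p ^ (n - i) := by rw [e3]; ring
      _ ≡ 1 * p ^ (n - i) [ZMOD (q : ℤ) - 1] := e1.mul_right _
      _ = p ^ (n - i) := one_mul _
  rw [Finset.sum_eq_zero hA, Finset.sum_eq_single 0] at hsum
  · have : q - 1 ∣ p ^ 0 + (q - 2) := by
      rw [pow_zero]; exact dvd_of_eq (by omega)
    rw [if_pos this] at hsum
    simp [ha] at hsum
  · intro i hi hi0
    have hi : i < n := Finset.mem_range.1 hi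
    rw [if_neg, mul_zero]
    intro hdvd
    have h1 : p ^ i < q := by rw [hqn]; exact Nat.pow_lt_pow_right hp1 hi
    have h2 : 1 < p ^ i := Nat.one_lt_pow hi0 hp1
    have h3 : q - 1 ∣ p ^ i - 1 := by
      have : p ^ i + (q - 2) = (p ^ i - 1) + (q - 1) := by omega
      rw [this] at hdvd
      exact (Nat.dvd_add_left dvd_rfl).1 hdvd
    have := Nat.le_of_dvd (by omega) h3
    omega
  · intro h0
    exact absurd (Finset.mem_range.2 hn0) h0

noncomputable def canonAC (p : ℕ) [Fact p.Prime] (K : Type) [Field K] [Fintype K]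
    [Algebra (ZMod p) K] : AddChar K ℂ :=
  (ZMod.stdAddChar (N := p)).compAddMonoidHom (Algebra.trace (ZMod p) K).toAddMonoidHom

theorem canonAC_std (p : ℕ) [Fact p.Prime] (K : Type) [Field K] [Fintype K]
    [Algebra (ZMod p) K] (x : K) :
    canonAC p K x = ZMod.stdAddChar (N := p) (Algebra.trace (ZMod p) K x) := rfl

theorem canonAC_apply (p : ℕ) [Fact p.Prime] (K : Type) [Field K] [Fintype K]
    [Algebra (ZMod p) K] (x : K) : canonicalAddChar p K x = canonAC p K x := by
  rw [canonAC_std, ZMod.stdAddChar_apply, ZMod.toCircle_apply]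
  rfl

theorem canonAC_eq_one (p : ℕ) [Fact p.Prime] (K : Type) [Field K] [Fintype K]
    [Algebra (ZMod p) K] (x : K) (h : canonAC p K x = 1) : Algebra.trace (ZMod p) K x = 0 := by
  rw [canonAC_std, ← (ZMod.stdAddChar (N := p)).map_zero_eq_one] at h
  exact ZMod.injective_stdAddChar h

theorem canonAC_prim (p : ℕ) [Fact p.Prime] (K : Type) [Field K] [Fintype K]
    [Algebra (ZMod p) K] : (canonAC p K).IsPrimitive := by
  apply AddChar.IsPrimitive.of_ne_one
  intro h
  obtain ⟨x, hx⟩ := Algebra.trace_surjective (ZMod p) K 1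
  have h1 : canonAC p K x = 1 := by rw [h]; rfl
  have := canonAC_eq_one p K x h1
  rw [hx] at this
  exact one_ne_zero this

theorem stmt12 (p : ℕ) [Fact p.Prime] (K : Type) [Field K] [Fintype K] [CharP K p]
    [Algebra (ZMod p) K]
    (d : ℤ) (hd : Int.gcd d ((Fintype.card K : ℤ) - 1) = 1)
    (hnd : ¬ IsDegenerate p (Fintype.card K) d) :
    (∃ a : K, a ≠ 0 ∧ ∃ r : ℝ, 0 < r ∧ weilSum p K d a = (r : ℂ)) ∧
    (∃ b : K, b ≠ 0 ∧ ∃ r : ℝ, r < 0 ∧ weilSum p K d b = (r : ℂ)) := by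
  have hd0 : d ≠ 0 := by
    rintro rfl
    apply hnd
    refine ⟨0, ?_⟩
    rw [Int.gcd_zero_left] at hd
    rw [Int.modEq_iff_dvd]
    have : IsUnit ((Fintype.card K : ℤ) - 1) := Int.isUnit_iff_natAbs_eq.2 hd
    exact this.dvd
  set ψ := canonAC p K with hψ
  have hprim : ψ.IsPrimitive := canonAC_prim p K
  have hW : ∀ a, weilSum p K d a = ∑ x : K, ψ (x ^ d + a * x) := fun a =>
    Finset.sum_congr rfl fun x _ => canonAC_apply p K _
  have hneg : ∀ x : K, (-x) ^ d = -(x ^ d) := by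
    intro x
    rcases (Fact.out : p.Prime).eq_two_or_odd' with h2 | hodd
    · subst h2
      rw [CharTwo.neg_eq, CharTwo.neg_eq]
    · have hq : Odd (Fintype.card K) := by
        rw [Module.card_eq_pow_finrank (K := ZMod p) (V := K), ZMod.card]
        exact hodd.pow
      apply Odd.neg_zpow
      by_contra hev
      rw [Int.not_odd_iff_even] at hev
      have h1 : (2 : ℤ) ∣ (Fintype.card K : ℤ) - 1 := by
        obtain ⟨k, hk⟩ := hq
        exact ⟨k, by rw [hk]; push_cast; ring⟩
      have h3 := Int.dvd_coe_gcd hev.two_dvd h1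
      rw [hd] at h3
      norm_num at h3
  have hinj : Function.Injective (fun x : K => x ^ d) := by
    intro x y hxy
    simp only at hxy
    by_cases hx : x = 0
    · subst hx
      rw [zero_zpow _ hd0] at hxy
      exact ((zpow_eq_zero_iff hd0).1 hxy.symm).symm
    by_cases hy : y = 0
    · subst hy
      rw [zero_zpow _ hd0] at hxy
      exact (zpow_eq_zero_iff hd0).1 hxy
    obtain ⟨u, v, huv⟩ := Int.isCoprime_iff_gcd_eq_one.2 hd
    have hm : (1 : ℤ) ≡ d * u [ZMOD (Fintype.card K : ℤ) - 1] := by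
      rw [Int.modEq_iff_dvd]
      exact ⟨-v, by linarith⟩
    rw [← zpow_one x, ← zpow_one y, zpow_card_aux K x hx _ _ hm, zpow_card_aux K y hy _ _ hm,
      zpow_mul, zpow_mul, hxy]
  have hbij : Function.Bijective (fun x : K => x ^ d) := Finite.injective_iff_bijective.1 hinj
  have hW0 : weilSum p K d 0 = 0 := by
    rw [hW]
    simp only [zero_mul, add_zero]
    rw [hbij.sum_comp (fun y => ψ y)]
    have := AddChar.sum_mulShift (ψ := ψ) (1 : K) hprim
    simpa using this
  have hreal : ∀ a, weilSum p K d a = ((weilSum p K d a).re : ℂ) := by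
    intro a
    symm
    rw [← Complex.conj_eq_iff_re, hW, map_sum]
    rw [← Equiv.sum_comp (Equiv.neg K)]
    refine Finset.sum_congr rfl fun x _ => ?_
    rw [← AddChar.map_neg_eq_conj]
    congr 1
    simp only [Equiv.neg_apply, hneg]
    ring
  have hS1 : ∑ a, weilSum p K d a = (Fintype.card K : ℂ) := by
    simp only [hW, AddChar.map_add_eq_mul]
    rw [Finset.sum_comm]
    simp only [← Finset.mul_sum, AddChar.sum_mulShift _ hprim]
    simp [zero_zpow _ hd0]
  have hS2 : ∑ a, weilSum p K d a * weilSum p K d a = (Fintype.card K : ℂ) * Fintype.card K := by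
    have h1 : ∀ a, weilSum p K d a * weilSum p K d a =
        ∑ x : K, ∑ y : K, ψ (x ^ d + y ^ d) * ψ (a * (x + y)) := by
      intro a
      rw [hW, Finset.sum_mul_sum]
      refine Finset.sum_congr rfl fun x _ => Finset.sum_congr rfl fun y _ => ?_
      rw [← AddChar.map_add_eq_mul, ← AddChar.map_add_eq_mul]
      congr 1
      ring
    simp only [h1]
    rw [Finset.sum_comm]
    have h2 : ∀ x : K, ∑ a : K, ∑ y : K, ψ (x ^ d + y ^ d) * ψ (a * (x + y)) =
        Fintype.card K := by
      intro x
      rw [Finset.sum_comm]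
      simp only [← Finset.mul_sum, AddChar.sum_mulShift _ hprim]
      rw [Finset.sum_eq_single (-x)]
      · simp [hneg]
      · intro y _ hy
        rw [if_neg]
        · simp
        · intro h
          exact hy (eq_neg_of_add_eq_zero_right h)
      · simp
    simp [h2]
  set w : K → ℝ := fun a => (weilSum p K d a).re with hw
  set q : ℝ := (Fintype.card K : ℝ) with hq
  have hqpos : 0 < q := by rw [hq]; exact_mod_cast Fintype.card_pos
  have hwW : ∀ a, weilSum p K d a = (w a : ℂ) := hreal
  have hw0 : w 0 = 0 := by simp [hw, hW0]
  have hs1 : ∑ a, w a = q := by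
    simp only [hwW] at hS1
    exact_mod_cast hS1
  have hs2 : ∑ a, w a * w a = q * q := by
    simp only [hwW] at hS2
    rw [hq]
    exact_mod_cast hS2
  have hpos : ∃ a, 0 < w a := by
    by_contra hc
    push Not at hc
    have := Finset.sum_nonpos (s := Finset.univ) fun a _ => hc a
    linarith
  constructor
  · obtain ⟨a, ha⟩ := hpos
    refine ⟨a, ?_, w a, ha, hwW a⟩
    rintro rfl
    linarith
  · by_contra hc
    have hnn : ∀ a, 0 ≤ w a := by
      intro a
      by_contra hlt
      push Not at hlt
      refine hc ⟨a, ?_, w a, hlt, hwW a⟩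
      rintro rfl
      linarith
    have hle : ∀ a, w a ≤ q := by
      intro a
      rw [← hs1]
      exact Finset.single_le_sum (f := w) (fun b _ => hnn b) (Finset.mem_univ a)
    have hz : ∑ a, w a * (q - w a) = 0 := by
      simp only [mul_sub, Finset.sum_sub_distrib, ← Finset.sum_mul, hs1, hs2]
      ring
    rw [Finset.sum_eq_zero_iff_of_nonneg
      (fun a _ => mul_nonneg (hnn a) (sub_nonneg.2 (hle a)))] at hz
    obtain ⟨a, ha⟩ := hpos
    have ha0 : a ≠ 0 := by
      rintro rfl
      linarith
    have haq : w a = q := by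
      rcases mul_eq_zero.1 (hz a (Finset.mem_univ a)) with h | h <;> linarith
    apply hnd
    apply degenerate_aux p K d a ha0
    intro x
    apply canonAC_eq_one
    have hre : ∀ y : K, (ψ y).re ≤ 1 := fun y => by
      have := Complex.re_le_norm (ψ y)
      rwa [AddChar.norm_apply] at this
    have hsum : ∑ x : K, (1 - (ψ (x ^ d + a * x)).re) = 0 := by
      rw [Finset.sum_sub_distrib, ← Complex.re_sum, ← hW]
      change _ - w a = 0
      rw [haq]
      simp [hq]
    rw [Finset.sum_eq_zero_iff_of_nonneg (fun y _ => sub_nonneg.2 (hre _))] at hsum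
    have h1 : (ψ (x ^ d + a * x)).re = 1 := by linarith [hsum x (Finset.mem_univ x)]
    have h2 : ‖ψ (x ^ d + a * x)‖ = 1 := AddChar.norm_apply _ _
    have h3 := Complex.sq_norm (ψ (x ^ d + a * x))
    rw [h2, Complex.normSq_apply, h1] at h3
    apply Complex.ext
    · exact h1
    · simp only [Complex.one_im]
      nlinarith
end

section
/- Let K be a finite field, let L be the quadratic extension of K (so K ⊆ L with [L : K] = 2), and let d be an integer with gcd(d, |L| − 1) = 1. Then ∑_{a ∈ K^×} W_{L,d}(a) = |L|. -/
open scoped BigOperators Classical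

noncomputable def myChar (p : ℕ) [Fact p.Prime] (K : Type) [Field K] [Fintype K]
    [Algebra (ZMod p) K] : AddChar K ℂ :=
  (ZMod.stdAddChar (N := p)).compAddMonoidHom (Algebra.trace (ZMod p) K).toAddMonoidHom

lemma myChar_eq (p : ℕ) [Fact p.Prime] (K : Type) [Field K] [Fintype K]
    [Algebra (ZMod p) K] (x : K) : canonicalAddChar p K x = myChar p K x := by
  unfold canonicalAddChar myChar
  rw [AddChar.compAddMonoidHom_apply, ZMod.stdAddChar_apply, ZMod.toCircle_apply]
  rfl

lemma myChar_prim (p : ℕ) [Fact p.Prime] (K : Type) [Field K] [Fintype K]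
    [Algebra (ZMod p) K] : (myChar p K).IsPrimitive := by
  apply AddChar.IsPrimitive.of_ne_one
  intro h
  obtain ⟨x, hx⟩ := Algebra.trace_surjective (ZMod p) K 1
  have h1 : myChar p K x = 1 := by rw [h]; rfl
  have h2 : ZMod.stdAddChar (N := p) (Algebra.trace (ZMod p) K x) = 1 := h1
  rw [hx, ← AddChar.map_zero_eq_one (ZMod.stdAddChar (N := p))] at h2
  exact one_ne_zero (ZMod.injective_stdAddChar h2)

lemma d_ne (L : Type) [Field L] [Fintype L] (n : ℕ) (hn : 2 < Fintype.card L)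
    (d : ℤ) (hd : Int.gcd d ((Fintype.card L : ℤ) - 1) = 1) : d ≠ 0 := by
  rintro rfl
  rw [Int.gcd_zero_left] at hd
  omega

lemma fermat (L : Type) [Field L] [Fintype L] (x : L) (hx : x ≠ 0) :
    x ^ ((Fintype.card L : ℤ) - 1) = 1 := by
  have := FiniteField.pow_card_sub_one_eq_one x hx
  rw [← this, ← zpow_natCast, Nat.cast_sub Fintype.card_pos]; simp

lemma zpow_inj (L : Type) [Field L] [Fintype L] (d : ℤ) (h0 : d ≠ 0)
    (hd : Int.gcd d ((Fintype.card L : ℤ) - 1) = 1) :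
    Function.Injective (fun x : L => x ^ d) := by
  have key : ∀ x : L, x ≠ 0 → x = (x ^ d) ^ (Int.gcdA d ((Fintype.card L : ℤ) - 1)) := by
    intro x hx
    have h := Int.gcd_eq_gcd_ab d ((Fintype.card L : ℤ) - 1)
    rw [hd] at h
    conv_lhs => rw [← zpow_one x, show (1 : ℤ) = ((1 : ℕ) : ℤ) from rfl, h, zpow_add₀ hx,
      zpow_mul, zpow_mul, fermat L x hx, one_zpow, mul_one]
  intro x y hxy
  simp only at hxy
  by_cases hx : x = 0
  · subst hx
    rw [zero_zpow d h0] at hxy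
    exact (eq_zero_of_zpow_eq_zero hxy.symm).symm
  · by_cases hy : y = 0
    · subst hy
      rw [zero_zpow d h0] at hxy
      exact (hx (eq_zero_of_zpow_eq_zero hxy)).elim
    · rw [key x hx, key y hy, hxy]

lemma neg_zpow_d (L : Type) [Field L] [Fintype L] (d : ℤ)
    (hd : Int.gcd d ((Fintype.card L : ℤ) - 1) = 1) (x : L) : (-x) ^ d = - x ^ d := by
  rcases Int.even_or_odd d with h | h
  · have ho : Odd ((Fintype.card L : ℤ) - 1) := by
      rw [← Int.not_even_iff_odd]
      intro he
      have := Int.dvd_coe_gcd h.two_dvd he.two_dvd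
      rw [hd] at this
      omega
    have h1 := fermat L (-1) (by simp)
    rw [ho.neg_one_zpow] at h1
    have : ∀ y : L, -y = y := fun y => by rw [← neg_one_mul, h1, one_mul]
    rw [this, this]
  · exact h.neg_zpow x

lemma trace_zpow (K L : Type) [Field K] [Fintype K]
    [Field L] [Fintype L] [Algebra K L]
    (h2 : Module.finrank K L = 2) (d : ℤ) (h0 : d ≠ 0)
    (hd : Int.gcd d ((Fintype.card L : ℤ) - 1) = 1) (x : L)
    (hx : Algebra.trace K L x = 0) : Algebra.trace K L (x ^ d) = 0 := by
  apply (algebraMap K L).injective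
  have e := FiniteField.algebraMap_trace_eq_sum_pow K L x
  rw [hx, h2] at e
  rw [FiniteField.algebraMap_trace_eq_sum_pow, h2, map_zero]
  simp only [Finset.sum_range_succ, Finset.sum_range_zero, map_zero, pow_zero, pow_one,
    zero_add] at e ⊢
  have e' : x ^ Nat.card K = -x := by linear_combination -e
  have : (x ^ d) ^ Nat.card K = (x ^ Nat.card K) ^ d := by
    rw [← zpow_natCast, ← zpow_natCast, ← zpow_mul, ← zpow_mul, mul_comm]
  rw [this, e', neg_zpow_d L d hd, add_neg_cancel]

theorem stmt13 (p : ℕ) [Fact p.Prime] (K L : Type) [Field K] [Fintype K] [DecidableEq K]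
    [Field L] [Fintype L] [CharP L p] [Algebra (ZMod p) L] [Algebra K L]
    (h2 : Module.finrank K L = 2)
    (d : ℤ) (hd : Int.gcd d ((Fintype.card L : ℤ) - 1) = 1) :
    ∑ a : Kˣ, weilSum p L d (algebraMap K L (a : K)) = (Fintype.card L : ℂ) := by
  have hcard : Fintype.card L = Fintype.card K ^ 2 := by
    rw [← h2]; exact Module.card_eq_pow_finrank
  have hK : 1 < Fintype.card K := Fintype.one_lt_card
  have h0 : d ≠ 0 := d_ne L 0 (by rw [hcard]; nlinarith) d hd
  haveI : CharP K p := (algebraMap K L).charP (algebraMap K L).injective p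
  letI : Algebra (ZMod p) K := ZMod.algebra K p
  haveI : IsScalarTower (ZMod p) K L := IsScalarTower.of_algebraMap_eq' (Subsingleton.elim _ _)
  have htr : ∀ x : L, myChar p L x = myChar p K (Algebra.trace K L x) := by
    intro x
    unfold myChar
    rw [AddChar.compAddMonoidHom_apply, AddChar.compAddMonoidHom_apply]
    congr 1
    exact (Algebra.trace_trace (S := K) x).symm
  have hmul : ∀ (a : K) (x : L), myChar p L (algebraMap K L a * x)
      = myChar p K (a * Algebra.trace K L x) := by
    intro a x
    rw [htr, ← Algebra.smul_def, map_smul, smul_eq_mul]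
  have hS : ∀ x : L, ∑ a : K, myChar p L (algebraMap K L a * x)
      = if Algebra.trace K L x = 0 then (Fintype.card K : ℂ) else 0 := by
    intro x
    simp only [hmul]
    have := AddChar.sum_mulShift (Algebra.trace K L x) (myChar_prim p K)
    rw [this]
    split_ifs <;> simp
  have hL : ∀ b : L, ∑ x : L, myChar p L (b * x)
      = if b = 0 then (Fintype.card L : ℂ) else 0 := by
    intro b
    have := AddChar.sum_mulShift b (myChar_prim p L)
    simp only [mul_comm b]
    rw [this]
    split_ifs <;> simp
  have hW0 : weilSum p L d (algebraMap K L 0) = 0 := by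
    unfold weilSum
    simp only [myChar_eq, map_zero, zero_mul, add_zero]
    have hb := Finite.injective_iff_bijective.mp (zpow_inj L d h0 hd)
    rw [hb.sum_comp (fun y => myChar p L y)]
    have := hL 1
    simpa using this
  have hall : ∑ a : K, weilSum p L d (algebraMap K L a) = (Fintype.card L : ℂ) := by
    unfold weilSum
    simp only [myChar_eq, AddChar.map_add_eq_mul]
    rw [Finset.sum_comm]
    have h1 : ∀ x : L, ∑ a : K, myChar p L (x ^ d) * myChar p L (algebraMap K L a * x)
        = ∑ a : K, myChar p L (algebraMap K L a * x) := by
      intro x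
      rw [← Finset.mul_sum, hS]
      split_ifs with h
      · rw [htr, trace_zpow K L h2 d h0 hd x h, AddChar.map_zero_eq_one, one_mul]
      · simp
    simp only [h1]
    rw [Finset.sum_comm]
    simp only [hL]
    simp
  rw [← hall, ← Finset.add_sum_erase Finset.univ _ (Finset.mem_univ (0 : K)), hW0, zero_add]
  refine Finset.sum_bij (fun a _ => (a : K)) ?_ ?_ ?_ ?_
  · intro a _; simp
  · intro a _ b _ h; exact Units.ext h
  · intro b hb
    exact ⟨Units.mk0 b (Finset.ne_of_mem_erase hb), Finset.mem_univ _, rfl⟩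
  · intro a _; rfl
end

section
/- Let K be a finite field and let d be an integer with gcd(d, |K| − 1) = 1. Then for every b ∈ K with b ≠ 1, one has ∑_{a ∈ K^×} W_{K,d}(a) · W_{K,d}(b·a) = 0. -/
open scoped BigOperators Classical

noncomputable def psiK (p : ℕ) [Fact p.Prime] (K : Type) [Field K] [Fintype K]
    [Algebra (ZMod p) K] : AddChar K ℂ :=
  (ZMod.stdAddChar (N := p)).compAddMonoidHom (Algebra.trace (ZMod p) K).toAddMonoidHom

theorem canon_eq (p : ℕ) [Fact p.Prime] (K : Type) [Field K] [Fintype K]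
    [Algebra (ZMod p) K] (x : K) : canonicalAddChar p K x = psiK p K x := by
  have h := ZMod.stdAddChar_coe (N := p) ((Algebra.trace (ZMod p) K x).val : ℤ)
  simp only [Int.cast_natCast, ZMod.natCast_zmod_val] at h
  simp only [psiK, canonicalAddChar, AddChar.compAddMonoidHom_apply]
  exact h.symm

theorem psiK_prim (p : ℕ) [Fact p.Prime] (K : Type) [Field K] [Fintype K]
    [Algebra (ZMod p) K] : (psiK p K).IsPrimitive := by
  apply AddChar.IsPrimitive.of_ne_one
  intro h
  obtain ⟨x, hx⟩ := Algebra.trace_surjective (ZMod p) K 1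
  have h1 : psiK p K x = 1 := by rw [h]; rfl
  have h2 : ZMod.stdAddChar (N := p) (1 : ZMod p) = 1 := by
    rw [← hx]; exact h1
  rw [← AddChar.map_zero_eq_one (ZMod.stdAddChar (N := p))] at h2
  exact one_ne_zero (ZMod.injective_stdAddChar h2)

theorem zpow_inj_of_coprime (K : Type) [Field K] [Fintype K] (d : ℤ) (hd0 : d ≠ 0)
    (hd : Int.gcd d ((Fintype.card K : ℤ) - 1) = 1) :
    Function.Injective (fun x : K => x ^ d) := by
  have key : ∀ x : K, x ≠ 0 → (x ^ d) ^ (Int.gcdA d ((Fintype.card K : ℤ) - 1)) = x := by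
    intro x hx
    have hb := Int.gcd_eq_gcd_ab d ((Fintype.card K : ℤ) - 1)
    rw [hd] at hb
    have h1 : x ^ ((Fintype.card K : ℤ) - 1) = 1 := by
      have := FiniteField.pow_card_sub_one_eq_one x hx
      rw [← zpow_natCast, Nat.cast_sub Fintype.card_pos] at this
      simpa using this
    rw [← zpow_mul]
    have e : d * Int.gcdA d ((Fintype.card K : ℤ) - 1) = 1 - ((Fintype.card K : ℤ) - 1) * Int.gcdB d ((Fintype.card K : ℤ) - 1) := by
      push_cast at hb
      linarith
    rw [e, zpow_sub₀ hx, zpow_mul, h1]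
    simp
  intro x y hxy
  simp only at hxy
  by_cases hx : x = 0
  · subst hx
    rw [zero_zpow d hd0] at hxy
    exact ((zpow_eq_zero_iff hd0).1 hxy.symm).symm
  · by_cases hy : y = 0
    · subst hy
      rw [zero_zpow d hd0] at hxy
      exact (zpow_eq_zero_iff hd0).1 hxy
    · rw [← key x hx, ← key y hy, hxy]

theorem stmt14 (p : ℕ) [Fact p.Prime] (K : Type) [Field K] [Fintype K] [DecidableEq K]
    [CharP K p] [Algebra (ZMod p) K]
    (d : ℤ) (hd : Int.gcd d ((Fintype.card K : ℤ) - 1) = 1) :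
    ∀ b : K, b ≠ 1 →
      ∑ a : Kˣ, weilSum p K d (a : K) * weilSum p K d (b * (a : K)) = 0 := by
  intro b hb
  have hP := psiK_prim p K
  have hsum : ∀ c : K, ∑ a : K, psiK p K (a * c) = if c = 0 then (Fintype.card K : ℂ) else 0 := by
    intro c
    have := AddChar.sum_mulShift c hP
    convert this using 1
    split_ifs <;> simp
  have hs1 : ∀ c : K, c ≠ 0 → ∑ a : K, psiK p K (a * c) = 0 := by
    intro c hc
    rw [hsum, if_neg hc]
  by_cases hd0 : d = 0
  · apply Finset.sum_eq_zero
    intro a _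
    have : weilSum p K d (a : K) = 0 := by
      simp only [weilSum, canon_eq, hd0, zpow_zero, AddChar.map_add_eq_mul]
      rw [← Finset.mul_sum]
      simp_rw [mul_comm (a : K)]
      rw [hs1 _ a.ne_zero, mul_zero]
    rw [this, zero_mul]
  have hinj := zpow_inj_of_coprime K d hd0 hd
  have hbij : Function.Bijective (fun x : K => x ^ d) := Finite.injective_iff_bijective.1 hinj
  have hpow : ∀ c : K, c ≠ 0 → ∑ x : K, psiK p K (x ^ d * c) = 0 := by
    intro c hc
    rw [← hs1 c hc]
    exact hbij.sum_comp (fun y => psiK p K (y * c))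
  have hW0 : weilSum p K d 0 = 0 := by
    simp only [weilSum, canon_eq, zero_mul, add_zero]
    simpa using hpow 1 one_ne_zero
  have hneg : (-1 : K) ^ d = -1 := by
    rcases Int.even_or_odd d with he | ho
    · have h1 : (-1 : K) = 1 := by
        apply hinj
        simp [he.neg_one_zpow]
      rw [h1, one_zpow]
    · exact ho.neg_one_zpow
  have hne : (-b) ^ d + 1 ≠ 0 := by
    intro h
    have : (-b) = -1 := by
      apply hinj
      simp only
      rw [hneg]
      exact eq_neg_of_add_eq_zero_left h
    exact hb (neg_injective this)
  have hall : ∑ a : K, weilSum p K d a * weilSum p K d (b * a) = 0 := by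
    calc ∑ a : K, weilSum p K d a * weilSum p K d (b * a)
        = ∑ a : K, ∑ y : K, ∑ x : K,
            psiK p K (x ^ d + y ^ d) * psiK p K (a * (x + b * y)) := by
          refine Finset.sum_congr rfl fun a _ => ?_
          simp only [weilSum, canon_eq]
          rw [Finset.sum_mul_sum, Finset.sum_comm]
          refine Finset.sum_congr rfl fun y _ => Finset.sum_congr rfl fun x _ => ?_
          rw [← AddChar.map_add_eq_mul, ← AddChar.map_add_eq_mul]
          congr 1
          ring
      _ = ∑ y : K, ∑ x : K, psiK p K (x ^ d + y ^ d) * ∑ a : K, psiK p K (a * (x + b * y)) := by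
          rw [Finset.sum_comm]
          refine Finset.sum_congr rfl fun y _ => ?_
          rw [Finset.sum_comm]
          simp_rw [Finset.mul_sum]
      _ = ∑ y : K, psiK p K (y ^ d * ((-b) ^ d + 1)) * (Fintype.card K : ℂ) := by
          refine Finset.sum_congr rfl fun y _ => ?_
          rw [Finset.sum_eq_single (-b * y)]
          · rw [hsum, if_pos (by ring), mul_zpow]
            congr 2
            ring
          · intro x _ hx
            rw [hs1, mul_zero]
            intro h
            apply hx
            linear_combination h
          · simp
      _ = 0 := by
          rw [← Finset.sum_mul, hpow _ hne, zero_mul]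
  rw [← hall]
  rw [← Finset.sum_subset (Finset.subset_univ (Finset.univ.filter fun a : K => a ≠ 0))]
  · refine Finset.sum_bij (fun a _ => (a : K)) ?_ ?_ ?_ ?_
    · intro a _; simp
    · intro a _ c _ h; exact Units.ext h
    · intro x hx
      exact ⟨Units.mk0 x (by simpa using hx), Finset.mem_univ _, rfl⟩
    · intro a _; rfl
  · intro x _ hx
    have : x = 0 := by simpa using hx
    rw [this, hW0, zero_mul]
end

section
/- Let K be a finite field of characteristic p, let L be an extension of K such that [L : K] is a power of a prime ℓ with ℓ ≠ p, and let d be an integer with gcd(d, |L| − 1) = 1. Let e be the multiplicative inverse of d modulo p − 1, and let c = [L : K]^(1 − e), an element of the prime field F_p ⊆ K. Then for every a ∈ K, the complex number (W_{L,d}(a) − W_{K,d}(c·a)) / ℓ is an algebraic integer (i.e., is integral over ℤ). -/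
open scoped BigOperators Classical

lemma stmt15_count {L F : Type} [Fintype L] (G : Type) [Group G] [MulAction G L] (ℓ : ℕ)
    [Fact ℓ.Prime] (hG : IsPGroup ℓ G) [Finite G] (T : L → F) (hT : ∀ (g : G) x, T (g • x) = T x) (t : F) :
    Nat.card {x : L // T x = t} ≡
      Nat.card {x : L // T x = t ∧ ∀ g : G, g • x = x} [MOD ℓ] := by
  let act : MulAction G {x : L // T x = t} :=
    { smul := fun g x => ⟨g • x.1, by rw [hT]; exact x.2⟩
      one_smul := fun x => Subtype.ext (one_smul G x.1)
      mul_smul := fun g h x => Subtype.ext (mul_smul g h x.1) }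
  have h := hG.card_modEq_card_fixedPoints {x : L // T x = t}
  have h2 : Nat.card (MulAction.fixedPoints G {x : L // T x = t}) =
      Nat.card {x : L // T x = t ∧ ∀ g : G, g • x = x} := by
    refine Nat.card_congr
      { toFun := fun x => ⟨x.1.1, x.1.2, fun g => congrArg Subtype.val (x.2 g)⟩
        invFun := fun x => ⟨⟨x.1, x.2.1⟩, fun g => Subtype.ext (x.2.2 g)⟩
        left_inv := fun x => rfl
        right_inv := fun x => rfl }
  rw [h2] at h
  exact h

lemma stmt15_sum {X F : Type} [Fintype X] [Fintype F] (T : X → F) (χ : F → ℂ) :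
    ∑ x, χ (T x) = ∑ t, (Nat.card {x : X // T x = t} : ℂ) * χ t := by
  rw [← Finset.sum_fiberwise (s := Finset.univ) (g := T)]
  refine Finset.sum_congr rfl fun t _ => ?_
  rw [Finset.sum_congr rfl (g := fun _ => χ t)]
  · rw [Finset.sum_const, nsmul_eq_mul, Nat.card_eq_fintype_card, Fintype.card_subtype]
  · intro x hx
    rw [(Finset.mem_filter.1 hx).2]

theorem stmt15 (p ℓ : ℕ) [Fact p.Prime] (hℓ : ℓ.Prime) (hℓp : ℓ ≠ p)
    (K L : Type) [Field K] [Fintype K] [CharP K p] [Algebra (ZMod p) K]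
    [Field L] [Fintype L] [CharP L p] [Algebra (ZMod p) L] [Algebra K L]
    (n : ℕ) (hn : Module.finrank K L = ℓ ^ n)
    (d : ℤ) (hd : Int.gcd d ((Fintype.card L : ℤ) - 1) = 1)
    (e : ℤ) (he : d * e ≡ 1 [ZMOD (p : ℤ) - 1])
    (c : K) (hc : c = ((Module.finrank K L : K)) ^ (1 - e)) :
    ∀ a : K,
      IsIntegral ℤ ((weilSum p L d (algebraMap K L a) - weilSum p K d (c * a)) / (ℓ : ℂ)) := by
  intro a
  have : Fact ℓ.Prime := ⟨hℓ⟩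
  have hp : p.Prime := Fact.out
  have : IsScalarTower (ZMod p) K L := IsScalarTower.of_algebraMap_eq' (RingHom.ext_zmod _ _)
  have : FiniteDimensional K L := Module.Finite.of_finite
  have hgal : IsGalois K L := inferInstance
  have hG : IsPGroup ℓ (L ≃ₐ[K] L) :=
    IsPGroup.of_card (n := n) (by rw [IsGalois.card_aut_eq_finrank, hn])
  set N : K := (Module.finrank K L : K) with hN
  have hN0 : N ≠ 0 := by
    rw [hN, hn, Ne, CharP.cast_eq_zero_iff K p]
    intro h
    exact hℓp ((Nat.prime_dvd_prime_iff_eq hp hℓ).1 (hp.dvd_of_dvd_pow h)).symm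
  have hNp : N ^ ((p : ℤ) - 1) = 1 := by
    have h1 : N ^ p = N := by
      have h := ZMod.pow_card (p := p) (Module.finrank K L : ZMod p)
      have := congrArg (algebraMap (ZMod p) K) h
      rwa [map_pow, map_natCast] at this
    rw [zpow_sub₀ hN0, zpow_natCast, h1, zpow_one, div_self hN0]
  have hNde : N ^ (d * e) = N := by
    obtain ⟨k, hk⟩ := he.symm.dvd
    have : d * e = 1 + ((p : ℤ) - 1) * k := by linarith
    rw [this, zpow_add₀ hN0, zpow_mul, hNp, one_zpow, mul_one, zpow_one]
  let TL : L → ZMod p := fun x => Algebra.trace (ZMod p) L (x ^ d + algebraMap K L a * x)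
  let TK : K → ZMod p := fun x => Algebra.trace (ZMod p) K (x ^ d + c * a * x)
  have hinv : ∀ (g : L ≃ₐ[K] L) x, TL (g • x) = TL x := by
    intro g x
    have h : (g • x) ^ d + algebraMap K L a * (g • x) = g (x ^ d + algebraMap K L a * x) := by
      simp [AlgEquiv.smul_def]
    simp only [TL]
    rw [h, ← Algebra.trace_trace (S := K), Algebra.trace_eq_of_algEquiv,
      Algebra.trace_trace (S := K)]
  have hTT : ∀ y : K, TL (algebraMap K L (N ^ (-e) * y)) = TK y := by
    intro y
    simp only [TL, TK]
    rw [← map_zpow₀, ← map_mul, ← map_add, ← Algebra.trace_trace (S := K),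
      Algebra.trace_algebraMap, nsmul_eq_mul, ← hN]
    congr 1
    have h1 : N * (N ^ (-e) * y) ^ d = y ^ d := by
      rw [mul_zpow, ← zpow_mul, show -e * d = -(d * e) by ring, zpow_neg, hNde,
        mul_inv_cancel_left₀ hN0]
    have h2 : c = N * N ^ (-e) := by
      rw [hc, sub_eq_add_neg, zpow_add₀ hN0, zpow_one]
    rw [mul_add, h1, h2]
    ring
  have hfix : ∀ t, Nat.card {x : L // TL x = t ∧ ∀ g : L ≃ₐ[K] L, g • x = x} =
      Nat.card {y : K // TK y = t} := by
    intro t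
    symm
    refine Nat.card_congr (Equiv.ofBijective
      (fun y => ⟨algebraMap K L (N ^ (-e) * y.1), (hTT _).trans y.2, fun g => by
        simp only [AlgEquiv.smul_def, AlgEquiv.commutes]⟩) ⟨?_, ?_⟩)
    · intro y z h
      have := (algebraMap K L).injective (congrArg Subtype.val h)
      exact Subtype.ext (mul_left_cancel₀ (zpow_ne_zero _ hN0) this)
    · rintro ⟨x, hx, hg⟩
      obtain ⟨z, rfl⟩ := (IsGalois.mem_range_algebraMap_iff_fixed x).2 hg
      have hz : N ^ (-e) * (N ^ e * z) = z := by
        rw [← mul_assoc, ← zpow_add₀ hN0]; simp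
      refine ⟨⟨N ^ e * z, ?_⟩, Subtype.ext ?_⟩
      · rw [← hTT, hz, hx]
      · simp only [hz]
  let χ : ZMod p → ℂ := fun t => Complex.exp (2 * Real.pi * Complex.I * (t.val : ℂ) / (p : ℂ))
  have hχ : ∀ t, IsIntegral ℤ (χ t) := by
    intro t
    have h1 : χ t ^ p = 1 := by
      simp only [χ]
      rw [← Complex.exp_nat_mul, mul_div_cancel₀ _ (by exact_mod_cast hp.ne_zero),
        mul_comm, Complex.exp_nat_mul_two_pi_mul_I]
    refine IsIntegral.of_pow hp.pos ?_
    rw [h1]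
    exact isIntegral_one
  have hWL : weilSum p L d (algebraMap K L a) = ∑ x, χ (TL x) := rfl
  have hWK : weilSum p K d (c * a) = ∑ x, χ (TK x) := rfl
  rw [hWL, hWK, stmt15_sum, stmt15_sum, ← Finset.sum_sub_distrib, Finset.sum_div]
  refine IsIntegral.sum _ fun t _ => ?_
  have h := stmt15_count (L ≃ₐ[K] L) ℓ hG TL hinv t
  rw [hfix] at h
  obtain ⟨m, hm⟩ := h.symm.dvd
  have hm' : (Nat.card {x : L // TL x = t} : ℂ) - Nat.card {y : K // TK y = t} = ℓ * m := by
    exact_mod_cast hm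
  have hl0 : (ℓ : ℂ) ≠ 0 := by exact_mod_cast hℓ.ne_zero
  rw [← sub_mul, hm', mul_assoc, mul_div_cancel_left₀ _ hl0]
  exact (isIntegral_algebraMap (R := ℤ) (x := m)).mul (hχ t)
end

section
/- Let K be a finite field of characteristic p, let L be the quadratic extension of K (so K ⊆ L with [L : K] = 2), and let d be an integer with gcd(d, |L| − 1) = 1 that is degenerate over K but nondegenerate over L. Then for every a ∈ L the value W_{L,d}(a) is an integer multiple of |K| (i.e., W_{L,d}(a) = |K|·n for some n ∈ ℤ), and there exists a ∈ L^× with W_{L,d}(a) = −|K|; in particular the minimum p-adic valuation of the values W_{L,d}(a) over a ∈ L^× equals [K : F_p]. -/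
open scoped BigOperators Classical

noncomputable def psiC (p : ℕ) [Fact p.Prime] (K : Type) [Field K] [Fintype K]
    [Algebra (ZMod p) K] : AddChar K ℂ :=
  (ZMod.stdAddChar (N := p)).compAddMonoidHom (Algebra.trace (ZMod p) K).toAddMonoidHom

lemma psiC_apply (p : ℕ) [Fact p.Prime] (K : Type) [Field K] [Fintype K]
    [Algebra (ZMod p) K] (x : K) :
    psiC p K x = ZMod.stdAddChar (N := p) (Algebra.trace (ZMod p) K x) := rfl

lemma psiC_eq (p : ℕ) [Fact p.Prime] (K : Type) [Field K] [Fintype K]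
    [Algebra (ZMod p) K] (x : K) : canonicalAddChar p K x = psiC p K x := by
  rw [psiC_apply, ZMod.stdAddChar_apply, ZMod.toCircle_apply, canonicalAddChar]

lemma psiC_prim (p : ℕ) [Fact p.Prime] (K : Type) [Field K] [Fintype K]
    [Algebra (ZMod p) K] : (psiC p K).IsPrimitive := by
  apply AddChar.IsPrimitive.of_ne_one
  intro h
  obtain ⟨x, hx⟩ := Algebra.trace_surjective (ZMod p) K 1
  have h1 : psiC p K x = 1 := by rw [h]; rfl
  rw [psiC_apply, hx, ← (ZMod.stdAddChar (N := p)).map_zero_eq_one] at h1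
  exact one_ne_zero (ZMod.injective_stdAddChar h1)

lemma psiC_frob (p : ℕ) [Fact p.Prime] (K : Type) [Field K] [Fintype K]
    [Algebra (ZMod p) K] (x : K) (k : ℕ) : psiC p K (x ^ (p ^ k)) = psiC p K x := by
  induction k with
  | zero => simp
  | succ k ih =>
    rw [← ih, pow_succ, pow_mul, psiC_apply, psiC_apply]
    congr 1
    have := Algebra.trace_eq_of_algEquiv (FiniteField.frobeniusAlgEquivOfAlgebraic (ZMod p) K)
      (x ^ p ^ k)
    rw [FiniteField.coe_frobeniusAlgEquivOfAlgebraic, ZMod.card] at this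
    exact this

lemma psiC_tower (p : ℕ) [Fact p.Prime] (K L : Type) [Field K] [Fintype K]
    [Field L] [Fintype L] [Algebra (ZMod p) L] [Algebra K L] [Algebra (ZMod p) K] (x : L) :
    psiC p L x = psiC p K (Algebra.trace K L x) := by
  have : IsScalarTower (ZMod p) K L := IsScalarTower.of_algebraMap_eq' (Subsingleton.elim _ _)
  have : Module.Finite K L := Module.Finite.of_finite
  rw [psiC_apply, psiC_apply, Algebra.trace_trace]

section core
variable {K L : Type} [Field K] [Fintype K] [Field L] [Fintype L] [Algebra K L]

lemma card_dvd_aux (P : L → Prop) (hP : ∀ (r : K) (y : L), r ≠ 0 → P y → P (algebraMap K L r * y))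
    (h0 : P 0) : ∃ N : ℕ, (Finset.univ.filter P).card = 1 + (Fintype.card K - 1) * N := by
  let H : Subgroup Lˣ := (Units.map (algebraMap K L : K →* L)).range
  let S : Finset Lˣ := Finset.univ.filter (fun v => P (v : L))
  have hS : (Finset.univ.filter P) = insert 0 (S.map ⟨Units.val, Units.val_injective⟩) := by
    ext y
    simp only [Finset.mem_filter, Finset.mem_univ, true_and, Finset.mem_insert, Finset.mem_map, S,
      Function.Embedding.coeFn_mk]
    constructor
    · intro hy
      by_cases h : y = 0
      · exact Or.inl h
      · exact Or.inr ⟨Units.mk0 y h, hy, rfl⟩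
    · rintro (rfl | ⟨v, hv, rfl⟩)
      · exact h0
      · exact hv
  have h1 : (Fintype.card K - 1) ∣ S.card := by
    rw [Finset.card_eq_sum_card_image (fun v : Lˣ => (QuotientGroup.mk v : Lˣ ⧸ H)) S]
    apply Finset.dvd_sum
    intro c hc
    obtain ⟨v, hv, rfl⟩ := Finset.mem_image.1 hc
    have : (S.filter (fun w => (QuotientGroup.mk w : Lˣ ⧸ H) = QuotientGroup.mk v)) =
        Finset.univ.image (fun r : Kˣ => Units.map (algebraMap K L : K →* L) r * v) := by
      ext w
      simp only [Finset.mem_filter, Finset.mem_image, Finset.mem_univ, true_and]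
      constructor
      · rintro ⟨_, hw⟩
        obtain ⟨r, hr⟩ := QuotientGroup.eq.1 hw.symm
        exact ⟨r, by rw [hr]; simp [mul_comm]⟩
      · rintro ⟨r, rfl⟩
        refine ⟨?_, ?_⟩
        · simp only [S, Finset.mem_filter, Finset.mem_univ, true_and] at hv ⊢
          exact hP r v r.ne_zero hv
        · symm
          refine QuotientGroup.eq.2 ⟨r, ?_⟩
          rw [mul_comm _ v]; simp
    rw [this, Finset.card_image_of_injective, Finset.card_univ, Fintype.card_units]
    intro r s hrs
    have := mul_right_cancel hrs
    have h3 := congrArg Units.val this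
    simp only [Units.coe_map, MonoidHom.coe_coe] at h3
    exact Units.ext ((algebraMap K L).injective h3)
  obtain ⟨N, hN⟩ := h1
  refine ⟨N, ?_⟩
  rw [hS, Finset.card_insert_of_notMem, Finset.card_map, hN, add_comm]
  simp

lemma zpow_one_of (F : Type) [Field F] [Fintype F] (e : ℤ)
    (h : ((Fintype.card F : ℤ) - 1) ∣ e) (x : F) (hx : x ≠ 0) : x ^ e = 1 := by
  obtain ⟨k, rfl⟩ := h
  have : x ^ ((Fintype.card F : ℤ) - 1) = 1 := by
    rw [zpow_sub₀ hx, zpow_natCast, FiniteField.pow_card, zpow_one, div_self hx]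
  rw [zpow_mul, this, one_zpow]

lemma dvd_of_zpow (F : Type) [Field F] [Fintype F] (e f : ℤ)
    (h : ∀ v : Fˣ, v ^ e = v ^ f) : ((Fintype.card F : ℤ) - 1) ∣ e - f := by
  obtain ⟨g, hg⟩ := IsCyclic.exists_generator (α := Fˣ)
  have h1 : orderOf g = Fintype.card F - 1 := by
    rw [orderOf_eq_card_of_forall_mem_zpowers hg, Nat.card_eq_fintype_card, Fintype.card_units]
  have h2 : g ^ (e - f) = 1 := by rw [zpow_sub, h g, mul_inv_cancel]
  have := orderOf_dvd_iff_zpow_eq_one.2 h2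
  rw [h1, Nat.cast_sub Fintype.card_pos] at this
  simpa using this

variable (ψL : AddChar L ℂ) (ψK : AddChar K ℂ) (d : ℤ)

noncomputable def WS (a : L) : ℂ := ∑ x : L, ψL (x ^ d + a * x)

lemma WS_scale (hψ : ∀ x, ψL x = ψK (Algebra.trace K L x))
    (hdeg : ((Fintype.card K : ℤ) - 1) ∣ d - 1) (a : L) (r : K) (hr : r ≠ 0) :
    WS ψL d a = ∑ y : L, ψK (r * Algebra.trace K L (y ^ d + a * y)) := by
  have hr' : algebraMap K L r ≠ 0 := by simpa using hr
  have hrd : r ^ d = r := by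
    have := zpow_one_of K (d - 1) hdeg r hr
    rw [zpow_sub₀ hr, zpow_one, div_eq_one_iff_eq hr] at this
    exact this
  unfold WS
  rw [← Equiv.sum_comp (Equiv.mulLeft₀ _ hr')]
  refine Finset.sum_congr rfl fun y _ => ?_
  rw [hψ]
  congr 1
  rw [← smul_eq_mul r, ← LinearMap.map_smul, Algebra.smul_def, Equiv.mulLeft₀_apply, mul_zpow,
    ← map_zpow₀, hrd]
  congr 1
  ring

lemma WS_count (hψ : ∀ x, ψL x = ψK (Algebra.trace K L x)) (hK : ψK.IsPrimitive)
    (hdeg : ((Fintype.card K : ℤ) - 1) ∣ d - 1) (a : L) :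
    ((Fintype.card K : ℂ) - 1) * WS ψL d a + Fintype.card L = Fintype.card K *
      (Finset.univ.filter (fun y : L => Algebra.trace K L (y ^ d + a * y) = 0)).card := by
  have h1 : ∑ r : K, ∑ y : L, ψK (r * Algebra.trace K L (y ^ d + a * y)) =
      ((Fintype.card K : ℂ) - 1) * WS ψL d a + Fintype.card L := by
    rw [← Finset.sum_erase_add _ _ (Finset.mem_univ (0 : K))]
    congr 1
    · rw [Finset.sum_congr rfl (g := fun _ => WS ψL d a), Finset.sum_const, Finset.card_erase_of_mem (Finset.mem_univ _),
        Finset.card_univ, nsmul_eq_mul, Nat.cast_sub Fintype.card_pos, Nat.cast_one]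
      intro r hr
      rw [WS_scale ψL ψK d hψ hdeg a r (Finset.ne_of_mem_erase hr)]
    · simp
  rw [← h1, Finset.sum_comm]
  simp_rw [AddChar.sum_mulShift _ hK]
  push_cast
  rw [← Finset.sum_filter, Finset.sum_const, nsmul_eq_mul, mul_comm]

lemma d_ne_zero (hcard : 3 ≤ Fintype.card L) (hd : Int.gcd d ((Fintype.card L : ℤ) - 1) = 1) :
    d ≠ 0 := by
  rintro rfl
  rw [Int.gcd_zero_left] at hd
  omega

lemma WS_int (hψ : ∀ x, ψL x = ψK (Algebra.trace K L x)) (hK : ψK.IsPrimitive)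
    (hQ : Fintype.card L = Fintype.card K ^ 2) (hd0 : d ≠ 0)
    (hdeg : ((Fintype.card K : ℤ) - 1) ∣ d - 1) (a : L) :
    ∃ N : ℕ, WS ψL d a = Fintype.card K * ((N : ℂ) - 1) := by
  have hq : 1 < Fintype.card K := Fintype.one_lt_card
  have := WS_count ψL ψK d hψ hK hdeg a
  obtain ⟨N, hN⟩ := card_dvd_aux (K := K)
    (fun y : L => Algebra.trace K L (y ^ d + a * y) = 0) (by
      intro r y hr hy
      have hrd : r ^ d = r := by
        have := zpow_one_of K (d - 1) hdeg r hr
        rw [zpow_sub₀ hr, zpow_one, div_eq_one_iff_eq hr] at this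
        exact this
      have : (algebraMap K L r * y) ^ d + a * (algebraMap K L r * y) = r • (y ^ d + a * y) := by
        rw [Algebra.smul_def, mul_zpow, ← map_zpow₀, hrd]; ring
      rw [this, LinearMap.map_smul, hy, smul_zero]) (by simp [zero_zpow d hd0])
  refine ⟨N, ?_⟩
  rw [hN, hQ] at this
  have h1 : (Fintype.card K : ℂ) - 1 ≠ 0 := by
    rw [sub_ne_zero]; exact_mod_cast hq.ne'
  apply mul_left_cancel₀ h1
  push_cast [Nat.cast_sub hq.le] at this
  linear_combination this

lemma WS_zero (hL : ψL.IsPrimitive) (hd0 : d ≠ 0)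
    (hd : Int.gcd d ((Fintype.card L : ℤ) - 1) = 1) : WS ψL d 0 = 0 := by
  have hinj : Function.Injective (fun x : L => x ^ d) := by
    intro x y hxy
    simp only at hxy
    by_cases hx : x = 0
    · subst hx
      rw [zero_zpow d hd0] at hxy
      by_contra hy
      exact zpow_ne_zero d (Ne.symm hy) hxy.symm
    · have hy : y ≠ 0 := by
        rintro rfl
        rw [zero_zpow d hd0] at hxy
        exact zpow_ne_zero d hx hxy
      have hb := Int.gcd_eq_gcd_ab d ((Fintype.card L : ℤ) - 1)
      rw [hd] at hb
      have key : ∀ z : L, z ≠ 0 → z = (z ^ d) ^ (Int.gcdA d ((Fintype.card L : ℤ) - 1)) := by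
        intro z hz
        have h9 : z ^ ((1 : ℕ) : ℤ) = (z ^ d) ^ (Int.gcdA d ((Fintype.card L : ℤ) - 1)) := by
          rw [hb, zpow_add₀ hz, zpow_mul, zpow_one_of L _ (Dvd.intro _ rfl) z hz, mul_one]
        simpa using h9
      rw [key x hx, key y hy, hxy]
  have hbij : Function.Bijective (fun x : L => x ^ d) := Finite.injective_iff_bijective.1 hinj
  unfold WS
  simp only [zero_mul, add_zero]
  rw [hbij.sum_comp (fun x => ψL x)]
  have := AddChar.sum_mulShift (1 : L) hL
  simpa using this

lemma WS_sum (hL : ψL.IsPrimitive) (hd0 : d ≠ 0) : ∑ a, WS ψL d a = Fintype.card L := by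
  unfold WS
  rw [Finset.sum_comm]
  simp_rw [AddChar.map_add_eq_mul, ← Finset.mul_sum, AddChar.sum_mulShift _ hL]
  simp [zero_zpow d hd0]

lemma WS_sq (hL : ψL.IsPrimitive) :
    ∑ a, WS ψL d a * (starRingEnd ℂ) (WS ψL d a) = (Fintype.card L : ℂ) ^ 2 := by
  have h1 : ∀ a, WS ψL d a * (starRingEnd ℂ) (WS ψL d a) =
      ∑ x : L, ∑ y : L, ψL (x ^ d - y ^ d) * ψL (a * (x - y)) := by
    intro a
    unfold WS
    rw [map_sum, Finset.sum_mul_sum]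
    refine Finset.sum_congr rfl fun x _ => Finset.sum_congr rfl fun y _ => ?_
    rw [← AddChar.map_neg_eq_conj, ← AddChar.map_add_eq_mul, ← AddChar.map_add_eq_mul]
    congr 1; ring
  simp_rw [h1]
  rw [Finset.sum_comm]
  simp_rw [Finset.sum_comm (s := (Finset.univ : Finset L)) (t := (Finset.univ : Finset L)) (f := fun a y => ψL (_ ^ d - y ^ d) * ψL (a * (_ - y)))]
  simp_rw [← Finset.mul_sum, AddChar.sum_mulShift _ hL, sub_eq_zero]
  simp [sq]

lemma nondeg_aux (h2 : Module.finrank K L = 2) (hQ : Fintype.card L = Fintype.card K ^ 2)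
    (hd : Int.gcd d ((Fintype.card L : ℤ) - 1) = 1)
    (hn1 : ¬ ((Fintype.card L : ℤ) - 1) ∣ d - 1)
    (hn2 : ¬ ((Fintype.card L : ℤ) - 1) ∣ d - Fintype.card K) (a : L)
    (h : ∀ y : L, Algebra.trace K L (y ^ d + a * y) = 0) : False := by
  have hq : 1 < Fintype.card K := Fintype.one_lt_card
  have hn3 : ¬ ((Fintype.card L : ℤ) - 1) ∣ d - d * Fintype.card K := by
    intro h3
    have h4 : ((Fintype.card L : ℤ) - 1) ∣ d * (Fintype.card K - 1) := by
      rw [← dvd_neg, show -(d * ((Fintype.card K : ℤ) - 1)) = d - d * Fintype.card K by ring]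
      exact h3
    have h5 := Int.dvd_of_dvd_mul_right_of_gcd_one h4 (by rw [Int.gcd_comm]; exact hd)
    have h6 := Int.le_of_dvd (by omega) h5
    rw [hQ] at h6
    push_cast at h6
    have : (1 : ℤ) < Fintype.card K := by exact_mod_cast hq
    nlinarith
  let χ : ℤ → (Lˣ →* L) := fun e => (Units.coeHom L).comp (zpowGroupHom e)
  have hχ : ∀ e (v : Lˣ), χ e v = (v : L) ^ e := by
    intro e v; simp [χ]
  have hne : ∀ e, ¬ ((Fintype.card L : ℤ) - 1) ∣ d - e → χ e ≠ χ d := by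
    intro e he heq
    apply he
    apply dvd_of_zpow
    intro v
    have := DFunLike.congr_fun heq v
    rw [hχ, hχ] at this
    apply Units.ext
    push_cast
    exact this.symm
  have hli := linearIndependent_monoidHom Lˣ L
  rw [linearIndependent_iff] at hli
  let q := Fintype.card K
  have := hli (Finsupp.single (χ d) 1 + Finsupp.single (χ (d * q)) 1 + Finsupp.single (χ 1) a
    + Finsupp.single (χ q) (a ^ q)) (by
      simp only [map_add, Finsupp.linearCombination_single]
      ext v
      have h7 := congrArg (algebraMap K L) (h v)
      rw [FiniteField.algebraMap_trace_eq_sum_pow, h2] at h7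
      simp only [Finset.sum_range_succ, Finset.sum_range_zero, pow_zero, pow_one, zero_add,
        map_zero, Nat.card_eq_fintype_card] at h7
      obtain ⟨p, hp⟩ := CharP.exists K
      have := hp
      have : Fact p.Prime := ⟨CharP.char_is_prime K p⟩
      have : CharP L p := charP_of_injective_algebraMap (algebraMap K L).injective p
      obtain ⟨n, _, hn⟩ := FiniteField.card K p
      rw [hn, add_pow_char_pow, ← hn] at h7
      simp only [Pi.add_apply, Pi.smul_apply, hχ, smul_eq_mul, Pi.zero_apply, one_mul, zpow_one,
        zpow_mul, zpow_natCast]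
      rw [mul_pow] at h7
      linear_combination h7)
  have h8 := DFunLike.congr_fun this (χ d)
  simp only [Finsupp.add_apply, Finsupp.single_eq_same, Finsupp.coe_zero, Pi.zero_apply] at h8
  rw [Finsupp.single_eq_of_ne' (hne _ hn3), Finsupp.single_eq_of_ne' (hne _ hn1),
    Finsupp.single_eq_of_ne' (hne _ hn2)] at h8
  simp at h8

lemma core_exists (hL : ψL.IsPrimitive) (hψ : ∀ x, ψL x = ψK (Algebra.trace K L x)) (hK : ψK.IsPrimitive)
    (h2 : Module.finrank K L = 2) (hQ : Fintype.card L = Fintype.card K ^ 2)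
    (hd : Int.gcd d ((Fintype.card L : ℤ) - 1) = 1) (hd0 : d ≠ 0)
    (hdeg : ((Fintype.card K : ℤ) - 1) ∣ d - 1)
    (hn1 : ¬ ((Fintype.card L : ℤ) - 1) ∣ d - 1)
    (hn2 : ¬ ((Fintype.card L : ℤ) - 1) ∣ d - Fintype.card K) :
    ∃ a : L, a ≠ 0 ∧ WS ψL d a = -(Fintype.card K : ℂ) := by
  by_contra hcon
  push Not at hcon
  have hq : 1 < Fintype.card K := Fintype.one_lt_card
  have hqc : (Fintype.card K : ℂ) ≠ 0 := by exact_mod_cast (by omega : Fintype.card K ≠ 0)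
  choose N hN using WS_int ψL ψK d hψ hK hQ hd0 hdeg
  set q := Fintype.card K with hqdef
  have hpos : ∀ a, 0 ≤ (N a : ℤ) - 1 := by
    intro a
    by_contra hlt
    have hN0 : N a = 0 := by omega
    have hW := hN a
    rw [hN0] at hW
    by_cases ha : a = 0
    · subst ha
      rw [WS_zero ψL d hL hd0 hd] at hW
      simp [hqc] at hW
    · exact hcon a ha (by rw [hW]; simp)
  have hs1 : ∑ a, ((N a : ℤ) - 1) = q := by
    have := WS_sum ψL d hL hd0
    simp_rw [hN, ← Finset.mul_sum] at this
    rw [hQ, Nat.cast_pow, sq] at this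
    have := mul_left_cancel₀ hqc this
    exact_mod_cast this
  have hs2 : ∑ a, ((N a : ℤ) - 1) ^ 2 = (q : ℤ) ^ 2 := by
    have := WS_sq ψL d hL
    simp_rw [hN] at this
    simp only [map_mul, map_sub, map_natCast, map_one] at this
    have h3 : ∀ a, (q : ℂ) * ((N a : ℂ) - 1) * (q * ((N a : ℂ) - 1)) = (q : ℂ) ^ 2 * ((N a : ℂ) - 1) ^ 2 := by
      intro a; ring
    simp_rw [h3, ← Finset.mul_sum] at this
    rw [hQ, Nat.cast_pow, sq ((q : ℂ) ^ 2)] at this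
    have := mul_left_cancel₀ (pow_ne_zero 2 hqc) this
    exact_mod_cast this
  have hle : ∀ a, (N a : ℤ) - 1 ≤ q := by
    intro a
    rw [← hs1]
    exact Finset.single_le_sum (f := fun a => (N a : ℤ) - 1) (fun i _ => hpos i) (Finset.mem_univ a)
  have hz : ∑ a, ((N a : ℤ) - 1) * (q - ((N a : ℤ) - 1)) = 0 := by
    have : ∀ a, ((N a : ℤ) - 1) * (q - ((N a : ℤ) - 1)) = q * ((N a : ℤ) - 1) - ((N a : ℤ) - 1) ^ 2 := by
      intro a; ring
    simp_rw [this]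
    rw [Finset.sum_sub_distrib, ← Finset.mul_sum, hs1, hs2]; ring
  have hz' := (Finset.sum_eq_zero_iff_of_nonneg (fun a _ =>
    mul_nonneg (hpos a) (sub_nonneg.2 (hle a)))).1 hz
  obtain ⟨a, _, ha⟩ := Finset.exists_ne_zero_of_sum_ne_zero (s := Finset.univ)
    (f := fun a => (N a : ℤ) - 1) (by rw [hs1]; exact_mod_cast (by omega : q ≠ 0))
  have hNa : (N a : ℤ) - 1 = q := by
    rcases mul_eq_zero.1 (hz' a (Finset.mem_univ a)) with h | h
    · exact absurd h ha
    · omega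
  have hW : WS ψL d a = (q : ℂ) * q := by
    rw [hN a]; congr 1; exact_mod_cast hNa
  have hc := WS_count ψL ψK d hψ hK hdeg a
  rw [hW, hQ] at hc
  have hc2 : ((Finset.univ.filter (fun y : L => Algebra.trace K L (y ^ d + a * y) = 0)).card : ℂ)
      = (q : ℂ) ^ 2 := by
    apply mul_left_cancel₀ hqc
    rw [← hc]; push_cast; ring
  have hc3 : (Finset.univ.filter (fun y : L => Algebra.trace K L (y ^ d + a * y) = 0)).card
      = Finset.card (Finset.univ : Finset L) := by
    rw [Finset.card_univ, hQ]; exact_mod_cast hc2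
  refine nondeg_aux d h2 hQ hd hn1 hn2 a fun y => ?_
  have := Finset.filter_card_eq hc3 y (Finset.mem_univ y)
  exact this

end core

theorem stmt18 (p : ℕ) [Fact p.Prime] (K L : Type) [Field K] [Fintype K]
    [Field L] [Fintype L] [CharP L p] [Algebra (ZMod p) L] [Algebra K L]
    [Algebra (ZMod p) K]
    (h2 : Module.finrank K L = 2)
    (d : ℤ) (hd : Int.gcd d ((Fintype.card L : ℤ) - 1) = 1)
    (hdegK : IsDegenerate p (Fintype.card K) d)
    (hndL : ¬ IsDegenerate p (Fintype.card L) d) :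
    (∀ a : L, ∃ n : ℤ, weilSum p L d a = (Fintype.card K : ℂ) * (n : ℂ)) ∧
    (∃ a : L, a ≠ 0 ∧ weilSum p L d a = -(Fintype.card K : ℂ)) ∧
    -- the minimum p-adic valuation of the values over a ∈ L^× equals [K : F_p]:
    ((∀ a : L, a ≠ 0 →
        ∃ n : ℤ, weilSum p L d a = (p : ℂ) ^ (Module.finrank (ZMod p) K) * (n : ℂ)) ∧
      ∃ a : L, a ≠ 0 ∧ ∃ n : ℤ,
        weilSum p L d a = (p : ℂ) ^ (Module.finrank (ZMod p) K) * (n : ℂ) ∧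
        ¬ (p : ℤ) ∣ n) := by
  have hp : p.Prime := Fact.out
  have hq : 1 < Fintype.card K := Fintype.one_lt_card
  have hQ : Fintype.card L = Fintype.card K ^ 2 := by
    rw [Module.card_eq_pow_finrank (K := K) (V := L), h2]
  have hqp : Fintype.card K = p ^ Module.finrank (ZMod p) K := by
    rw [Module.card_eq_pow_finrank (K := ZMod p) (V := K), ZMod.card]
  set m := Module.finrank (ZMod p) K with hm
  have hmpos : 1 ≤ m := by
    rcases Nat.eq_zero_or_pos m with h | h
    · rw [h, pow_zero] at hqp; omega
    · exact h
  obtain ⟨j, hj⟩ := hdegK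
  -- powers of q
  have hqK : (p : ℤ) ^ m ≡ 1 [ZMOD (Fintype.card K : ℤ) - 1] := by
    rw [hqp]; push_cast
    exact (Int.modEq_iff_dvd.2 (by rw [← dvd_neg]; simp))
  have hqL : (p : ℤ) ^ (2 * m) ≡ 1 [ZMOD (Fintype.card L : ℤ) - 1] := by
    rw [hQ, hqp, ← pow_mul, mul_comm m 2]; push_cast
    exact (Int.modEq_iff_dvd.2 (by rw [← dvd_neg]; simp))
  -- exponent
  obtain ⟨k, hk⟩ : ∃ k, j + k = m * j :=
    ⟨m * j - j, by have : j ≤ m * j := Nat.le_mul_of_pos_left j hmpos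
                   omega⟩
  obtain ⟨k', hk'⟩ : ∃ k', k + k' = 2 * m * k :=
    ⟨2 * m * k - k, by have : k ≤ 2 * m * k := Nat.le_mul_of_pos_left k (by omega)
                       omega⟩
  let e : ℤ := d * (p : ℤ) ^ k
  have hcop : Int.gcd e ((Fintype.card L : ℤ) - 1) = 1 := by
    rw [← Int.isCoprime_iff_gcd_eq_one] at hd ⊢
    refine IsCoprime.mul_left hd (IsCoprime.pow_left ?_)
    rw [hQ, hqp, ← pow_mul]
    push_cast
    obtain ⟨t, ht⟩ : ∃ t, m * 2 = t + 1 := ⟨m * 2 - 1, by omega⟩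
    rw [ht, pow_succ]
    exact ⟨(p : ℤ) ^ t, -1, by ring⟩
  have hcardL : 3 ≤ Fintype.card L := by rw [hQ]; nlinarith
  have hd0 := d_ne_zero (L := L) d hcardL hd
  have he0 := d_ne_zero (L := L) e hcardL hcop
  have hdeg : ((Fintype.card K : ℤ) - 1) ∣ e - 1 := by
    apply Int.ModEq.dvd
    symm
    calc e ≡ (p : ℤ) ^ j * (p : ℤ) ^ k [ZMOD (Fintype.card K : ℤ) - 1] := hj.mul_right _
      _ = ((p : ℤ) ^ m) ^ j := by rw [← pow_add, hk, pow_mul]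
      _ ≡ 1 ^ j [ZMOD (Fintype.card K : ℤ) - 1] := hqK.pow j
      _ = 1 := one_pow j
  have hn : ∀ i : ℕ, ¬ ((Fintype.card L : ℤ) - 1) ∣ e - (p : ℤ) ^ i := by
    intro i hi
    apply hndL
    refine ⟨i + k', ?_⟩
    have h1 : e ≡ (p : ℤ) ^ i [ZMOD (Fintype.card L : ℤ) - 1] := (Int.modEq_iff_dvd.2 hi).symm
    symm
    calc (p : ℤ) ^ (i + k') = (p : ℤ) ^ i * (p : ℤ) ^ k' := pow_add _ _ _
      _ ≡ e * (p : ℤ) ^ k' [ZMOD (Fintype.card L : ℤ) - 1] := h1.symm.mul_right _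
      _ = d * ((p : ℤ) ^ (2 * m)) ^ k := by rw [← pow_mul, ← hk', pow_add]; simp only [e]; ring
      _ ≡ d * 1 ^ k [ZMOD (Fintype.card L : ℤ) - 1] := (hqL.pow k).mul_left _
      _ = d := by simp
  have hW : ∀ a : L, weilSum p L d a = WS (psiC p L) e a := by
    intro a
    unfold weilSum WS
    refine Finset.sum_congr rfl fun x _ => ?_
    rw [psiC_eq, AddChar.map_add_eq_mul, AddChar.map_add_eq_mul]
    congr 1
    simp only [e]
    rw [zpow_mul, ← Nat.cast_pow, zpow_natCast, psiC_frob]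
  have hψ := psiC_tower p K L
  have h1 := WS_int (psiC p L) (psiC p K) e hψ (psiC_prim p K) hQ he0 hdeg
  have h3 := core_exists (psiC p L) (psiC p K) e (psiC_prim p L) hψ (psiC_prim p K) h2 hQ hcop he0
    hdeg (by simpa using hn 0) (by rw [hqp]; exact_mod_cast hn m)
  have hA : ∀ a : L, ∃ n : ℤ, weilSum p L d a = (Fintype.card K : ℂ) * (n : ℂ) := by
    intro a
    obtain ⟨N, hN⟩ := h1 a
    exact ⟨(N : ℤ) - 1, by rw [hW, hN]; push_cast; ring⟩
  obtain ⟨a, ha, hWa⟩ := h3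
  have hqc : (Fintype.card K : ℂ) = (p : ℂ) ^ m := by rw [hqp]; push_cast; rfl
  refine ⟨hA, ⟨a, ha, by rw [hW, hWa]⟩, ?_, a, ha, -1, ?_, ?_⟩
  · intro b _
    rw [← hqc]; exact hA b
  · rw [hW, hWa, hqc]; simp
  · intro hdvd
    have := Int.isUnit_iff.1 (isUnit_of_dvd_unit hdvd (by simp))
    have := hp.two_le
    omega
end

section
/- Let K be a finite field, let L be the quadratic extension of K (so K ⊆ L with [L : K] = 2), and let d be an integer with gcd(d, |L| − 1) = 1 that is degenerate over K. Then for every a ∈ K, the value W_{L,d}(a) is a nonnegative real number. -/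
open scoped BigOperators Classical

lemma can_eq (p : ℕ) [Fact p.Prime] (L : Type) [Field L] [Fintype L]
    [Algebra (ZMod p) L] (x : L) :
    canonicalAddChar p L x = ZMod.stdAddChar (Algebra.trace (ZMod p) L x) := by
  unfold canonicalAddChar
  have h := ZMod.stdAddChar_coe (N := p) ((Algebra.trace (ZMod p) L x).val : ℤ)
  rw [Int.cast_natCast, ZMod.natCast_zmod_val] at h
  rw [h, Int.cast_natCast]

/-- the character -/
noncomputable def canChar (p : ℕ) [Fact p.Prime] (L : Type) [Field L] [Fintype L]
    [Algebra (ZMod p) L] : AddChar L ℂ :=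
  (ZMod.stdAddChar (N := p)).compAddMonoidHom (Algebra.trace (ZMod p) L).toAddMonoidHom

lemma can_eq' (p : ℕ) [Fact p.Prime] (L : Type) [Field L] [Fintype L]
    [Algebra (ZMod p) L] (x : L) : canonicalAddChar p L x = canChar p L x := can_eq p L x

lemma trace_frob (p : ℕ) [Fact p.Prime] (L : Type) [Field L] [Fintype L]
    [Algebra (ZMod p) L] (j : ℕ) (x : L) :
    Algebra.trace (ZMod p) L (x ^ p ^ j) = Algebra.trace (ZMod p) L x := by
  induction j with
  | zero => simp
  | succ k ih =>
    rw [← ih, pow_succ, pow_mul]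
    have h := Algebra.trace_eq_of_algEquiv
      (FiniteField.frobeniusAlgEquivOfAlgebraic (ZMod p) L) (x ^ p ^ k)
    simpa [ZMod.card] using h

lemma trace_zero (p : ℕ) [Fact p.Prime] (K L : Type) [Field K] [Fintype K]
    [Field L] [Fintype L] [CharP L p] [Algebra (ZMod p) L] [Algebra K L] (x : L)
    (h : Algebra.trace K L x = 0) : Algebra.trace (ZMod p) L x = 0 := by
  haveI : CharP K p := (algebraMap K L).charP (algebraMap K L).injective p
  letI := ZMod.algebra K p
  haveI : IsScalarTower (ZMod p) K L := IsScalarTower.of_algebraMap_eq' (Subsingleton.elim _ _)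
  rw [← Algebra.trace_trace (S := K), h, map_zero]

lemma trace_iff (K L : Type) [Field K] [Fintype K]
    [Field L] [Fintype L] [Algebra K L] (h2 : Module.finrank K L = 2) (x : L) :
    Algebra.trace K L x = 0 ↔ x ^ Fintype.card K = - x := by
  rw [← (algebraMap K L).injective.eq_iff, FiniteField.algebraMap_trace_eq_sum_pow, h2]
  simp [Finset.sum_range_succ]
  rw [add_comm, add_eq_zero_iff_eq_neg]

lemma card_ker (K L : Type) [Field K] [Fintype K]
    [Field L] [Fintype L] [Algebra K L] (h2 : Module.finrank K L = 2) :
    (Finset.univ.filter fun x : L => Algebra.trace K L x = 0).card = Fintype.card K := by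
  have h := (Algebra.trace K L).finrank_range_add_finrank_ker
  rw [LinearMap.range_eq_top.2 (Algebra.trace_surjective K L), finrank_top, h2,
    Module.finrank_self] at h
  have h1 : Module.finrank K (LinearMap.ker (Algebra.trace K L)) = 1 := by omega
  have h3 := Module.card_eq_pow_finrank (K := K) (V := LinearMap.ker (Algebra.trace K L))
  rw [h1, pow_one] at h3
  rw [← h3, Fintype.card_subtype]
  congr 1

lemma zpow_deg (p : ℕ) (K : Type) [Field K] [Fintype K] (d : ℤ) (j : ℕ)
    (h : d ≡ (p : ℤ) ^ j [ZMOD (Fintype.card K : ℤ) - 1]) (c : K) (hc : c ≠ 0) :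
    c ^ d = c ^ p ^ j := by
  obtain ⟨k, hk⟩ := h.symm.dvd
  have : d = ((p ^ j : ℕ) : ℤ) + ((Fintype.card K - 1 : ℕ) : ℤ) * k := by
    rw [Nat.cast_sub Fintype.card_pos]; push_cast; linarith
  rw [this, zpow_add₀ hc, zpow_mul, zpow_natCast, zpow_natCast,
    FiniteField.pow_card_sub_one_eq_one c hc, one_zpow, mul_one]

lemma neg_one_zpow' (L : Type) [Field L] [Fintype L] (d : ℤ)
    (hd : Int.gcd d ((Fintype.card L : ℤ) - 1) = 1) : (-1 : L) ^ d = -1 := by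
  by_cases h : ringChar L = 2
  · haveI := ringChar.of_eq h
    rw [CharTwo.neg_eq, one_zpow]
  · have ho := FiniteField.odd_card_of_char_ne_two h
    apply Odd.neg_one_zpow
    rw [← Int.not_even_iff_odd]
    intro he
    have : (2 : ℤ) ∣ (Int.gcd d ((Fintype.card L : ℤ) - 1) : ℤ) := by
      apply Int.dvd_coe_gcd he.two_dvd
      omega
    rw [hd] at this
    norm_num at this

theorem stmt19 (p : ℕ) [Fact p.Prime] (K L : Type) [Field K] [Fintype K]
    [Field L] [Fintype L] [CharP L p] [Algebra (ZMod p) L] [Algebra K L]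
    (h2 : Module.finrank K L = 2)
    (d : ℤ) (hd : Int.gcd d ((Fintype.card L : ℤ) - 1) = 1)
    (hdegK : IsDegenerate p (Fintype.card K) d) :
    ∀ a : K, ∃ r : ℝ, 0 ≤ r ∧ weilSum p L d (algebraMap K L a) = (r : ℂ) := by
  intro a
  obtain ⟨j, hj⟩ := hdegK
  haveI : CharP K p := (algebraMap K L).charP (algebraMap K L).injective p
  have hcL : Fintype.card L = Fintype.card K ^ 2 := by
    rw [← h2]; exact Module.card_eq_pow_finrank
  have hq1 : 1 < Fintype.card K := Fintype.one_lt_card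
  set q := Fintype.card K with hq
  set ψ := canChar p L with hψ
  set y : L → L := fun x => x ^ d + (algebraMap K L a * x) ^ p ^ j with hy
  -- rewriting of W
  have hW : ∀ c : K, c ≠ 0 → weilSum p L d (algebraMap K L a) =
      ∑ x : L, ψ (algebraMap K L (c ^ p ^ j) * y x) := by
    intro c hc
    have hc' : algebraMap K L c ≠ 0 := by simpa using hc
    unfold weilSum
    rw [← Equiv.sum_comp (Equiv.mulLeft₀ (algebraMap K L c) hc')]
    refine Finset.sum_congr rfl fun x _ => ?_
    rw [can_eq', hy]
    change canChar p L ((algebraMap K L c * x) ^ d + algebraMap K L a * (algebraMap K L c * x)) = ψ (algebraMap K L (c ^ p ^ j) * (x ^ d + (algebraMap K L a * x) ^ p ^ j))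
    rw [mul_zpow, ← map_zpow₀, zpow_deg p K d j hj c hc, mul_add, AddChar.map_add_eq_mul,
      AddChar.map_add_eq_mul]
    congr 1
    have := trace_frob p L j (algebraMap K L a * (algebraMap K L c * x))
    have e : algebraMap K L (c ^ p ^ j) * (algebraMap K L a * x) ^ p ^ j =
      (algebraMap K L a * (algebraMap K L c * x)) ^ p ^ j := by
      rw [map_pow, ← mul_pow]; ring
    rw [e]
    change ZMod.stdAddChar (Algebra.trace (ZMod p) L _) = ZMod.stdAddChar (Algebra.trace (ZMod p) L _)
    rw [this]
  set S : L → ℂ := fun x => ∑ c : K, ψ (algebraMap K L c * y x) with hS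
  have hS1 : ∀ x, S x = 0 ∨ S x = (q : ℂ) := by
    intro x
    let φ : AddChar K ℂ := ψ.compAddMonoidHom
      ((AddMonoidHom.mulRight (y x)).comp (algebraMap K L).toAddMonoidHom)
    have : S x = ∑ c, φ c := rfl
    rw [this, AddChar.sum_eq_ite]
    split_ifs
    · right; simp [hq]
    · left; rfl
  have hS2 : ∀ x, Algebra.trace K L x = 0 → S x = (q : ℂ) := by
    intro x hx
    rw [trace_iff K L h2, ← hq] at hx
    have hyx : Algebra.trace K L (y x) = 0 := by
      obtain ⟨n, hp, hn⟩ := FiniteField.card K p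
      have hm : ((-1 : L)) ^ p ^ j = -1 := by
        have := (frobenius L p).map_neg 1
        have := (iterateFrobenius L p j).map_neg 1
        simpa [iterateFrobenius_def] using this
      rw [trace_iff K L h2, ← hq, hy]
      simp only
      have e1 : (x ^ d + (algebraMap K L a * x) ^ p ^ j) ^ q =
          (x ^ d) ^ q + ((algebraMap K L a * x) ^ p ^ j) ^ q := by
        rw [hq, hn]; exact add_pow_char_pow _ _ _ _
      have ha : (algebraMap K L a) ^ q = algebraMap K L a := by
        rw [← map_pow, FiniteField.pow_card]
      have e2 : (x ^ d) ^ q = - x ^ d := by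
        rw [← zpow_natCast, zpow_comm, zpow_natCast, hx, neg_eq_neg_one_mul, mul_zpow,
          neg_one_zpow' L d hd, neg_one_mul]
      rw [e1, e2, ← pow_mul, mul_comm (p ^ j), pow_mul, mul_pow _ x q, ha, hx, mul_neg,
        neg_eq_neg_one_mul (algebraMap K L a * x), mul_pow (-1 : L), hm]
      ring
    have : ∀ c : K, ψ (algebraMap K L c * y x) = 1 := by
      intro c
      change ZMod.stdAddChar (Algebra.trace (ZMod p) L _) = 1
      rw [trace_zero p K L, AddChar.map_zero_eq_one]
      rw [← Algebra.smul_def, map_smul, hyx, smul_zero]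
    simp [hS, this, hq]
  have key : ∑ x, S x = (q : ℂ) ^ 2 + ((q : ℂ) - 1) * weilSum p L d (algebraMap K L a) := by
    rw [hS, Finset.sum_comm, ← (iterateFrobeniusEquiv K p j).toEquiv.sum_comp,
      ← Finset.add_sum_erase _ _ (Finset.mem_univ (0 : K))]
    congr 1
    · simp [hcL]
    · rw [Finset.sum_congr rfl (g := fun _ => weilSum p L d (algebraMap K L a))]
      · rw [Finset.sum_const, Finset.card_erase_of_mem (Finset.mem_univ _), Finset.card_univ,
          nsmul_eq_mul, Nat.cast_sub hq1.le, Nat.cast_one]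
      · intro c hc
        rw [hW c (Finset.ne_of_mem_erase hc)]
        rfl
  set N := (Finset.univ.filter fun x => S x = (q : ℂ)).card with hN
  have hNq : q ≤ N := by
    rw [hq, ← card_ker K L h2]
    exact Finset.card_le_card fun x hx => by
      simp only [Finset.mem_filter, Finset.mem_univ, true_and] at hx ⊢
      exact hS2 x hx
  have hsum : ∑ x, S x = (N : ℂ) * q := by
    rw [hN, ← nsmul_eq_mul, ← Finset.sum_const, Finset.sum_filter]
    refine Finset.sum_congr rfl fun x _ => ?_
    rcases hS1 x with h | h
    · split_ifs with h'
      · exact h'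
      · exact h
    · rw [if_pos h, h]
  have hqr : (1 : ℝ) < q := by exact_mod_cast hq1
  have hNr : (q : ℝ) ≤ N := by exact_mod_cast hNq
  refine ⟨((N : ℝ) * q - q ^ 2) / (q - 1), div_nonneg (by nlinarith) (by linarith), ?_⟩
  have hne : (q : ℂ) - 1 ≠ 0 := by
    have : (q : ℝ) - 1 ≠ 0 := by linarith
    exact_mod_cast this
  push_cast
  rw [eq_div_iff hne, ← hsum, key]
  ring
end
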